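/- arXiv:1503.04038 — 2 statements merged into one kernel-verified Lean document; each statement's English description precedes it below -/
import Mathlib

section
/- Fix positive real numbers α and β. The following are equivalent: (i) αβ ≤ 1; (ii) every f ∈ L¹(ℝ, ℂ) satisfying ∫_ℝ e^{iπαmt} f(t) dt = 0 for all m ∈ ℤ and ∫_ℝ e^{−iπβn/t} f(t) dt = 0 for all n ∈ ℤ vanishes almost everywhere on ℝ. -/
open MeasureTheory Real Set
open scoped ENNReal

/-- Unfolding a nonnegative integral over the translates of a half-open interval. -/
lemma lintegral_eq_tsum_lintegral_translate (g : ℝ → ℝ≥0∞) (a : ℝ) {p : ℝ} (hp : 0 < p) :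
    ∫⁻ x, g x = ∑' j : ℤ, ∫⁻ x in Ioc a (a + p), g (x + j * p) := by
  rw [← setLIntegral_univ, ← iUnion_Ioc_add_zsmul hp a,
    lintegral_iUnion (fun _ ↦ measurableSet_Ioc) (pairwise_disjoint_Ioc_add_zsmul a p)]
  refine tsum_congr fun j ↦ ?_
  rw [← (measurePreserving_add_right volume ((j : ℝ) * p)).setLIntegral_comp_preimage_emb
    (measurableEmbedding_addRight _)]
  congr 2
  ext x
  simp only [zsmul_eq_mul, mem_preimage, mem_Ioc, Int.cast_add, Int.cast_one]
  constructor <;> rintro ⟨h₁, h₂⟩ <;> constructor <;> linarith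

/-- Unfolding a Bochner integral over the translates of a half-open interval. -/
lemma hasSum_integral_translate {E : Type*} [NormedAddCommGroup E] [NormedSpace ℝ E]
    {g : ℝ → E} (hg : Integrable g) (a : ℝ) {p : ℝ} (hp : 0 < p) :
    HasSum (fun j : ℤ ↦ ∫ x in Ioc a (a + p), g (x + j * p)) (∫ x, g x) := by
  have h := hasSum_integral_iUnion (μ := volume) (f := g) (fun _ ↦ measurableSet_Ioc)
    (pairwise_disjoint_Ioc_add_zsmul a p) hg.integrableOn
  rw [iUnion_Ioc_add_zsmul hp a, setIntegral_univ] at h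
  convert h using 2 with j
  rw [← (measurePreserving_add_right volume ((j : ℝ) * p)).setIntegral_preimage_emb
    (measurableEmbedding_addRight _) g (Ioc (a + j • p) (a + (j + 1) • p))]
  congr 2
  ext x
  simp only [zsmul_eq_mul, mem_preimage, mem_Ioc, Int.cast_add, Int.cast_one]
  constructor <;> rintro ⟨h₁, h₂⟩ <;> constructor <;> linarith

/-- The sum of `g` over the nonzero translates `t + 2j`, `j ≠ 0`. -/
noncomputable def foldSum (g : ℝ → ℝ≥0∞) (t : ℝ) : ℝ≥0∞ :=
  ∑' k : ℕ, (g (t + 2 * (k + 1)) + g (t - 2 * (k + 1)))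

lemma foldSum_mono {g₁ g₂ : ℝ → ℝ≥0∞} (h : ∀ x, g₁ x ≤ g₂ x) (t : ℝ) :
    foldSum g₁ t ≤ foldSum g₂ t :=
  ENNReal.tsum_le_tsum fun _ ↦ add_le_add (h _) (h _)

lemma foldSum_add (g₁ g₂ : ℝ → ℝ≥0∞) (t : ℝ) :
    foldSum (fun x ↦ g₁ x + g₂ x) t = foldSum g₁ t + foldSum g₂ t := by
  unfold foldSum
  rw [← ENNReal.tsum_add]
  exact tsum_congr fun _ ↦ add_add_add_comm _ _ _ _

lemma foldSum_comp_neg (g : ℝ → ℝ≥0∞) (t : ℝ) :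
    foldSum (fun x ↦ g (-x)) t = foldSum g (-t) := by
  unfold foldSum
  refine tsum_congr fun k ↦ ?_
  simp only [neg_add', neg_sub', sub_neg_eq_add]
  exact add_comm _ _

lemma measurable_foldSum {g : ℝ → ℝ≥0∞} (hg : Measurable g) : Measurable (foldSum g) := by
  unfold foldSum
  fun_prop

lemma lintegral_foldSum_add {g : ℝ → ℝ≥0∞} (hg : Measurable g) :
    (∫⁻ t in Ioo (-1) 1, foldSum g t) + ∫⁻ t in Ioo (-1) 1, g t = ∫⁻ t, g t := by
  rw [lintegral_eq_tsum_lintegral_translate g (-1) two_pos,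
    tsum_of_add_one_of_neg_add_one ENNReal.summable ENNReal.summable]
  unfold foldSum
  rw [lintegral_tsum (by fun_prop)]
  have hI : (-1 : ℝ) + 2 = 1 := by norm_num
  simp only [hI, restrict_Ioo_eq_restrict_Ioc, Int.cast_zero, zero_mul, add_zero]
  have h : ∀ k : ℕ, ∫⁻ t in Ioc (-1 : ℝ) 1, (g (t + 2 * (k + 1)) + g (t - 2 * (k + 1)))
      = (∫⁻ t in Ioc (-1 : ℝ) 1, g (t + ((k : ℤ) + 1 : ℤ) * 2))
        + ∫⁻ t in Ioc (-1 : ℝ) 1, g (t + (-((k : ℤ) + 1) : ℤ) * 2) := by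
    intro k
    rw [lintegral_add_left (by fun_prop)]
    congr 2 <;> ext t <;> congr 1 <;> push_cast <;> ring
  simp_rw [h]
  rw [ENNReal.tsum_add]
  ring

lemma lintegral_Ioo_add_lintegral_one_lt_abs (g : ℝ → ℝ≥0∞) :
    (∫⁻ t in {x : ℝ | 1 < |x|}, g t) + ∫⁻ t in Ioo (-1) 1, g t = ∫⁻ t, g t := by
  have hM : MeasurableSet {x : ℝ | 1 < |x|} := measurableSet_lt measurable_const (by fun_prop)
  have hc : {x : ℝ | 1 < |x|}ᶜ = Icc (-1) 1 := by
    ext x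
    simp [abs_le]
  rw [restrict_Ioo_eq_restrict_Icc, ← hc, lintegral_add_compl g hM]

lemma lintegral_foldSum {g : ℝ → ℝ≥0∞} (hg : Measurable g) (hfin : ∫⁻ t, g t ≠ ∞) :
    ∫⁻ t in Ioo (-1) 1, foldSum g t = ∫⁻ t in {x : ℝ | 1 < |x|}, g t := by
  have h := (lintegral_foldSum_add hg).trans (lintegral_Ioo_add_lintegral_one_lt_abs g).symm
  exact (ENNReal.add_left_inj (ne_top_of_le_ne_top hfin (setLIntegral_le_lintegral _ _))).1 h

lemma lintegral_one_lt_abs_inversion {β : ℝ} (hβ : 0 < β) (g : ℝ → ℝ≥0∞) :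
    ∫⁻ x in {x : ℝ | 1 < |x|}, ENNReal.ofReal (β / x ^ 2) * g (β / x)
      = ∫⁻ s in Ioo (-β) β, g s := by
  have hM : MeasurableSet {x : ℝ | 1 < |x|} := measurableSet_lt measurable_const (by fun_prop)
  have hne : ∀ x ∈ {x : ℝ | 1 < |x|}, x ≠ 0 := by
    rintro x hx rfl
    norm_num at hx
  have himg : (fun x : ℝ ↦ β / x) '' {x : ℝ | 1 < |x|} = Ioo (-β) β \ {0} := by
    ext s
    simp only [mem_image, mem_ofPred_eq, mem_sdiff, ← abs_lt, mem_Ioo, mem_singleton_iff]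
    constructor
    · rintro ⟨x, hx, rfl⟩
      refine ⟨?_, div_ne_zero hβ.ne' (hne x hx)⟩
      rw [abs_div, abs_of_pos hβ]
      exact div_lt_self hβ hx
    · rintro ⟨hs, hs0⟩
      refine ⟨β / s, ?_, by field_simp⟩
      rw [abs_div, abs_of_pos hβ, one_lt_div (abs_pos.2 hs0)]
      exact hs
  have h := lintegral_image_eq_lintegral_abs_deriv_mul (f := fun x : ℝ ↦ β / x)
    (f' := fun x ↦ -β / x ^ 2) hM (fun x hx ↦ by
      simpa [div_eq_mul_inv] using
        ((hasDerivAt_inv (hne x hx)).const_mul β).hasDerivWithinAt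
          (s := {x : ℝ | 1 < |x|})) (fun x hx y hy hxy ↦ by
      have hx' := hne x hx
      have hy' := hne y hy
      simp only at hxy
      field_simp at hxy
      exact hxy.symm) g
  rw [himg, setLIntegral_congr (sdiff_null_ae_eq_self (measure_singleton 0))] at h
  rw [h]
  congr 1
  ext x
  rw [neg_div, abs_neg, abs_of_nonneg (by positivity)]

/-- The invariant density of the map `x ↦ 1 / x` modulo `2`, scaled by `c`. -/
noncomputable def cuspDensity (c x : ℝ) : ℝ≥0∞ := ENNReal.ofReal (c / |1 - x ^ 2|)

lemma measurable_cuspDensity (c : ℝ) : Measurable (cuspDensity c) := by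
  unfold cuspDensity
  fun_prop

lemma cuspDensity_inversion (c : ℝ) {x : ℝ} (hx : x ≠ 0) :
    ENNReal.ofReal (1 / x ^ 2) * cuspDensity c (1 / x) = cuspDensity c x := by
  have hx2 : 0 < x ^ 2 := by positivity
  unfold cuspDensity
  rw [← ENNReal.ofReal_mul (by positivity)]
  congr 1
  have : 1 - (1 / x) ^ 2 = -(1 - x ^ 2) / x ^ 2 := by field_simp; ring
  rw [this, abs_div, abs_neg, abs_of_pos hx2]
  field_simp

lemma sum_range_one_div_sq_sub_one_le {s : ℝ} (hs : 0 < 1 + s) (n : ℕ) :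
    ∑ k ∈ Finset.range n, 1 / ((s + 2 * (k + 1)) ^ 2 - 1) ≤ 1 / (2 * (1 + s)) := by
  have h : ∀ n : ℕ, ∑ k ∈ Finset.range n, 1 / ((s + 2 * (k + 1)) ^ 2 - 1)
      = 1 / (2 * (1 + s)) - 1 / (2 * (1 + s + 2 * n)) := by
    intro n
    induction n with
    | zero => simp
    | succ n ih =>
      rw [Finset.sum_range_succ, ih]
      have hn : (0 : ℝ) ≤ n := n.cast_nonneg
      have h1 : 1 + s + 2 * (n : ℝ) ≠ 0 := by positivity
      have h2 : 1 + s + 2 * ((n : ℝ) + 1) ≠ 0 := by positivity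
      have h3 : (s + 2 * ((n : ℝ) + 1)) ^ 2 - 1
          = (1 + s + 2 * (n : ℝ)) * (1 + s + 2 * ((n : ℝ) + 1)) := by ring
      rw [h3]
      push_cast
      field_simp
      ring
  rw [h]
  have : (0 : ℝ) ≤ 1 / (2 * (1 + s + 2 * n)) := by positivity
  linarith

lemma foldSum_cuspDensity_le {c : ℝ} (hc : 0 ≤ c) {t : ℝ} (ht : t ∈ Ioo (-1 : ℝ) 1) :
    foldSum (cuspDensity c) t ≤ cuspDensity c t := by
  obtain ⟨h1, h2⟩ := ht
  have key : ∀ k : ℕ, cuspDensity c (t + 2 * (k + 1)) + cuspDensity c (t - 2 * (k + 1))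
      = ENNReal.ofReal (c * (1 / ((t + 2 * (k + 1)) ^ 2 - 1)
        + 1 / ((-t + 2 * (k + 1)) ^ 2 - 1))) := by
    intro k
    have hk : (0 : ℝ) ≤ k := k.cast_nonneg
    have e1 : 0 < (t + 2 * (k + 1)) ^ 2 - 1 := by nlinarith
    have e2 : 0 < (-t + 2 * (k + 1)) ^ 2 - 1 := by nlinarith
    have e3 : (t - 2 * ((k : ℝ) + 1)) ^ 2 = (-t + 2 * (k + 1)) ^ 2 := by ring
    unfold cuspDensity
    rw [e3, abs_sub_comm 1, abs_sub_comm 1, abs_of_pos e1, abs_of_pos e2,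
      ← ENNReal.ofReal_add (by positivity) (by positivity)]
    congr 1
    ring
  unfold foldSum
  refine ENNReal.tsum_le_of_sum_range_le fun n ↦ ?_
  simp_rw [key]
  rw [← ENNReal.ofReal_sum_of_nonneg]
  · unfold cuspDensity
    refine ENNReal.ofReal_le_ofReal ?_
    rw [← Finset.mul_sum, Finset.sum_add_distrib, abs_of_pos (by nlinarith), div_eq_mul_inv]
    refine mul_le_mul_of_nonneg_left ?_ hc
    have a1 := sum_range_one_div_sq_sub_one_le (s := t) (by linarith) n
    have a2 := sum_range_one_div_sq_sub_one_le (s := -t) (by linarith) n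
    have a3 : (1 - t ^ 2)⁻¹ = 1 / (2 * (1 + t)) + 1 / (2 * (1 + -t)) := by
      have : 1 + t ≠ 0 := by linarith
      have : 1 + -t ≠ 0 := by linarith
      have : 1 - t ^ 2 ≠ 0 := by nlinarith
      field_simp
      ring
    rw [a3]
    exact add_le_add a1 a2
  · intro k _
    have hk : (0 : ℝ) ≤ k := k.cast_nonneg
    have e1 : 0 < (t + 2 * (k + 1)) ^ 2 - 1 := by nlinarith
    have e2 : 0 < (-t + 2 * (k + 1)) ^ 2 - 1 := by nlinarith
    positivity

/-- A symmetric integrable density dominated on `(-1, 1)` by its fold, i.e. a subinvariant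
density for the map `x ↦ β / x` modulo `2`. -/
structure IsSubinvariant (β : ℝ) (w : ℝ → ℝ≥0∞) : Prop where
  measurable : Measurable w
  lintegral_ne_top : ∫⁻ x, w x ≠ ∞
  inversion : ∀ x ≠ 0, ENNReal.ofReal (β / x ^ 2) * w (β / x) = w x
  even : ∀ x, w (-x) = w x
  le_foldSum : ∀ᵐ t ∂volume.restrict (Ioo (-1) 1), w t ≤ foldSum w t

namespace IsSubinvariant

variable {β : ℝ} {w : ℝ → ℝ≥0∞}

lemma ae_le_cuspDensity_of_lt_one (hw : IsSubinvariant β w) (hβ : 0 < β) (hβ1 : β < 1) {c : ℝ}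
    (hc : 0 < c) : ∀ᵐ t ∂volume.restrict (Ioo (-1) 1), w t ≤ cuspDensity c t := by
  have hmeas : ∀ c, Measurable fun x ↦ w x - cuspDensity c x := fun c ↦
    hw.measurable.sub (measurable_cuspDensity c)
  have hfin : ∀ c, ∫⁻ x, (w x - cuspDensity c x) ≠ ∞ := fun c ↦
    ne_top_of_le_ne_top hw.lintegral_ne_top (lintegral_mono fun _ ↦ tsub_le_self)
  have hmono : ∀ x, cuspDensity c x ≤ cuspDensity (c / β) x := fun x ↦ by
    refine ENNReal.ofReal_le_ofReal ?_
    gcongr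
    rw [le_div_iff₀ hβ]
    nlinarith
  have h1 : ∫⁻ t in Ioo (-1) 1, (w t - cuspDensity c t)
      ≤ ∫⁻ t in Ioo (-1) 1, foldSum (fun x ↦ w x - cuspDensity c x) t := by
    refine lintegral_mono_ae ?_
    filter_upwards [hw.le_foldSum, ae_restrict_mem measurableSet_Ioo] with t ht htI
    rw [tsub_le_iff_right]
    calc w t ≤ foldSum w t := ht
      _ ≤ foldSum (fun x ↦ (w x - cuspDensity c x) + cuspDensity c x) t :=
          foldSum_mono (fun x ↦ le_tsub_add) t
      _ ≤ _ := by
          rw [foldSum_add]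
          gcongr
          exact foldSum_cuspDensity_le hc.le htI
  have h2 : ∫⁻ x in {x : ℝ | 1 < |x|}, (w x - cuspDensity c x)
      ≤ ∫⁻ x in {x : ℝ | 1 < |x|},
        ENNReal.ofReal (β / x ^ 2) * (w (β / x) - cuspDensity (c / β) (β / x)) := by
    refine setLIntegral_mono' (measurableSet_lt measurable_const (by fun_prop)) fun x hx ↦ ?_
    have hx1 : 1 < x ^ 2 := by
      rw [← sq_abs]
      exact one_lt_pow₀ hx two_ne_zero
    have hx0 : x ≠ 0 := by rintro rfl; norm_num at hx1
    rw [ENNReal.mul_sub fun _ _ ↦ ENNReal.ofReal_ne_top, hw.inversion x hx0]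
    refine tsub_le_tsub_left ?_ _
    unfold cuspDensity
    rw [← ENNReal.ofReal_mul (by positivity)]
    refine ENNReal.ofReal_le_ofReal ?_
    have hb : β ^ 2 < 1 := by nlinarith
    have e1 : 1 - (β / x) ^ 2 = (x ^ 2 - β ^ 2) / x ^ 2 := by field_simp
    rw [e1, abs_sub_comm 1, abs_of_pos (sub_pos.2 hx1),
      abs_of_pos (div_pos (by linarith) (by positivity))]
    have e2 : β / x ^ 2 * (c / β / ((x ^ 2 - β ^ 2) / x ^ 2)) = c / (x ^ 2 - β ^ 2) := by
      have : x ^ 2 - β ^ 2 ≠ 0 := by linarith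
      field_simp
    rw [e2]
    exact div_le_div_of_nonneg_left hc.le (by linarith) (by linarith)
  rw [lintegral_foldSum (hmeas c) (hfin c)] at h1
  rw [lintegral_one_lt_abs_inversion hβ (fun x ↦ w x - cuspDensity (c / β) x)] at h2
  have h3 : ∫⁻ t in Ioo (-1) 1, (w t - cuspDensity c t)
      ≤ ∫⁻ t in Ioo (-1) 1, (w t - cuspDensity (c / β) t) :=
    (h1.trans h2).trans (lintegral_mono_set (Ioo_subset_Ioo (by linarith) hβ1.le))
  have h4 := ae_eq_of_ae_le_of_lintegral_le
    (Filter.Eventually.of_forall fun t ↦ tsub_le_tsub_left (hmono t) (w t))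
    (ne_top_of_le_ne_top (hfin (c / β)) (setLIntegral_le_lintegral _ _)) (hmeas c).aemeasurable h3
  have h5 := ae_restrict_of_ae (s := Ioo (-1 : ℝ) 1)
    (ae_lt_top hw.measurable hw.lintegral_ne_top)
  filter_upwards [h4, h5, ae_restrict_mem measurableSet_Ioo] with t ht htop htI
  by_contra! hlt
  have h6 : cuspDensity c t < cuspDensity (c / β) t := by
    have : 0 < |1 - t ^ 2| := abs_pos.2 (by nlinarith [htI.1, htI.2])
    refine (ENNReal.ofReal_lt_ofReal_iff (by positivity)).2 ?_
    gcongr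
    rw [lt_div_iff₀ hβ]
    nlinarith
  rcases le_total (w t) (cuspDensity (c / β) t) with hle | hle
  · rw [tsub_eq_zero_of_le hle] at ht
    exact (tsub_pos_of_lt hlt).ne ht
  · exact h6.ne' ((ENNReal.sub_right_inj htop.ne hle hlt.le).1 ht)

lemma foldSum_ae_eq (hw : IsSubinvariant 1 w) :
    w =ᵐ[volume.restrict (Ioo (-1) 1)] foldSum w := by
  refine ae_eq_of_ae_le_of_lintegral_le hw.le_foldSum
    (ne_top_of_le_ne_top hw.lintegral_ne_top (setLIntegral_le_lintegral _ _))
    (measurable_foldSum hw.measurable).aemeasurable ?_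
  rw [lintegral_foldSum hw.measurable hw.lintegral_ne_top,
    ← lintegral_one_lt_abs_inversion one_pos w]
  refine (setLIntegral_congr_fun (measurableSet_lt measurable_const (by fun_prop))
    fun x hx ↦ ?_).le
  exact (hw.inversion x (by rintro rfl; norm_num at hx)).symm

/-- Superlevel sets of the invariant quotient `w / cuspDensity` are invariant under the branch
`t ↦ 1 / (2 - t)` that fixes the cusp `1`. -/
lemma ae_cuspDensity_le_comp (hw : IsSubinvariant 1 w) {c : ℝ} (hc : 0 < c) :
    ∀ᵐ t ∂volume.restrict (Ioo (-1) 1),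
      cuspDensity c t ≤ w t → cuspDensity c (1 / (2 - t)) ≤ w (1 / (2 - t)) := by
  set m : ℝ → ℝ≥0∞ := fun x ↦ min (w x) (cuspDensity c x) with hm
  have hmm : Measurable m := hw.measurable.min (measurable_cuspDensity c)
  have hmfin : ∫⁻ x, m x ≠ ∞ :=
    ne_top_of_le_ne_top hw.lintegral_ne_top (lintegral_mono fun _ ↦ min_le_left _ _)
  have hminv : ∀ x ≠ 0, ENNReal.ofReal (1 / x ^ 2) * m (1 / x) = m x := fun x hx ↦ by
    rw [hm]
    simp only
    rw [mul_min, hw.inversion x hx, cuspDensity_inversion c hx]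
  have hfold : foldSum m =ᵐ[volume.restrict (Ioo (-1) 1)] m := by
    refine ae_eq_of_ae_le_of_lintegral_le ?_ ?_ hmm.aemeasurable ?_
    · filter_upwards [hw.foldSum_ae_eq, ae_restrict_mem measurableSet_Ioo] with t ht htI
      refine le_min ?_ ?_
      · exact (foldSum_mono (fun _ ↦ min_le_left _ _) t).trans ht.ge
      · exact (foldSum_mono (fun _ ↦ min_le_right _ _) t).trans (foldSum_cuspDensity_le hc.le htI)
    · rw [lintegral_foldSum hmm hmfin]
      exact ne_top_of_le_ne_top hmfin (setLIntegral_le_lintegral _ _)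
    · rw [lintegral_foldSum hmm hmfin, ← lintegral_one_lt_abs_inversion one_pos m]
      refine (setLIntegral_congr_fun (measurableSet_lt measurable_const (by fun_prop))
        fun x hx ↦ ?_).le
      exact hminv x (by rintro rfl; norm_num at hx)
  filter_upwards [hfold, ae_restrict_mem measurableSet_Ioo] with t ht htI hle
  have hmt : m t = cuspDensity c t := min_eq_right hle
  have h2t : (2 - t) ≠ 0 := by linarith [htI.2]
  have hle' : cuspDensity c (t - 2) ≤ w (t - 2) := by
    by_contra! hlt
    have hsum : foldSum m t < foldSum (cuspDensity c) t := by
      refine ENNReal.tsum_lt_tsum (i := 0) ?_ (fun k ↦ add_le_add (min_le_right _ _)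
        (min_le_right _ _)) ?_
      · change foldSum m t ≠ ∞
        rw [ht, hmt]
        exact ENNReal.ofReal_ne_top
      · have h0 : t - 2 * (((0 : ℕ) : ℝ) + 1) = t - 2 := by norm_num
        rw [h0]
        exact ENNReal.add_lt_add_of_le_of_lt
          (ne_top_of_le_ne_top ENNReal.ofReal_ne_top (min_le_right _ _)) (min_le_right _ _)
          (min_lt_of_left_lt hlt)
    rw [ht, hmt] at hsum
    exact absurd hsum (foldSum_cuspDensity_le hc.le htI).not_gt
  have heven : cuspDensity c (t - 2) = cuspDensity c (2 - t) := by
    unfold cuspDensity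
    congr 3
    ring
  rw [heven, ← cuspDensity_inversion c h2t, ← hw.even, neg_sub, ← hw.inversion _ h2t] at hle'
  exact (ENNReal.mul_le_mul_iff_right (by
    rw [ne_eq, ENNReal.ofReal_eq_zero, not_le]
    positivity) ENNReal.ofReal_ne_top).1 hle'

end IsSubinvariant

lemma ae_tsum_nat_translate_ne_top {g : ℝ → ℝ≥0∞} (hg : Measurable g) (hfin : ∫⁻ x, g x ≠ ∞) :
    ∀ᵐ k : ℝ, ∑' n : ℕ, g (k + n) ≠ ∞ := by
  have h : ∀ i : ℤ, ∀ᵐ k ∂volume.restrict (Ioc ((0 : ℝ) + i • 1) (0 + (i + 1) • 1)),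
      ∑' n : ℕ, g (k + n) ≠ ∞ := by
    intro i
    have hle : ∫⁻ k in Ioc ((0 : ℝ) + i • 1) (0 + (i + 1) • 1), ∑' n : ℕ, g (k + n)
        ≤ ∫⁻ x, g x := by
      rw [lintegral_tsum (by fun_prop),
        lintegral_eq_tsum_lintegral_translate g ((0 : ℝ) + i • 1) one_pos]
      have he : (0 : ℝ) + (i + 1) • 1 = 0 + i • 1 + 1 := by simp
      rw [he]
      refine le_trans (le_of_eq ?_) (ENNReal.tsum_comp_le_tsum_of_injective
        (f := ((↑) : ℕ → ℤ)) Nat.cast_injective _)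
      simp
    filter_upwards [ae_lt_top (by fun_prop) (ne_top_of_le_ne_top hfin hle)] with k hk
    exact hk.ne
  rw [← Measure.restrict_univ (μ := volume), ← iUnion_Ioc_add_zsmul one_pos (0 : ℝ),
    ae_restrict_iUnion_iff]
  exact h

lemma tsum_ofReal_div_two_mul_sub_one_eq_top {c k : ℝ} (hc : 0 < c) (hk : 1 / 2 < k) :
    ∑' n : ℕ, ENNReal.ofReal (c / (2 * (k + n) - 1)) = ∞ := by
  by_contra h
  have hpos : ∀ n : ℕ, 0 < n + (k - 1 / 2) := fun n ↦ by
    have : (0 : ℝ) ≤ n := n.cast_nonneg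
    linarith
  have hs := ENNReal.summable_toReal h
  refine absurd ((Real.summable_one_div_nat_add_rpow (k - 1 / 2) 1).1 ?_) (lt_irrefl _)
  refine (hs.mul_left (2 / c)).congr fun n ↦ ?_
  have h0 : 0 < 2 * (k + n) - 1 := by linarith [hpos n]
  rw [ENNReal.toReal_ofReal (by positivity), rpow_one, abs_of_pos (hpos n)]
  have h1 : 2 * (k + n) - 1 = 2 * (n + (k - 1 / 2)) := by ring
  rw [h1]
  have := (hpos n).ne'
  field_simp

/-- The coordinate `t = 1 - 1 / k`, in which `t ↦ 1 / (2 - t)` becomes `k ↦ k + 1`. -/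
lemma lintegral_Ioo_eq_lintegral_Ioi (g : ℝ → ℝ≥0∞) :
    ∫⁻ t in Ioo (-1) 1, g t
      = ∫⁻ k in Ioi (1 / 2 : ℝ), ENNReal.ofReal (1 / k ^ 2) * g (1 - 1 / k) := by
  have hpos : ∀ k ∈ Ioi (1 / 2 : ℝ), 0 < k := fun k hk ↦ lt_trans (by norm_num) (mem_Ioi.1 hk)
  have himg : (fun k : ℝ ↦ 1 - 1 / k) '' Ioi (1 / 2) = Ioo (-1) 1 := by
    ext t
    simp only [mem_image, mem_Ioo]
    constructor
    · rintro ⟨k, hk, rfl⟩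
      have hk0 := hpos k hk
      have : 1 / k < 2 := by
        rw [div_lt_iff₀ hk0]
        linarith [mem_Ioi.1 hk]
      constructor
      · linarith
      · linarith [one_div_pos.2 hk0]
    · rintro ⟨h1, h2⟩
      have : 0 < 1 - t := by linarith
      refine ⟨1 / (1 - t), ?_, by simp⟩
      rw [mem_Ioi]
      exact one_div_lt_one_div_of_lt this (by linarith)
  rw [← himg, lintegral_image_eq_lintegral_abs_deriv_mul (f' := fun k ↦ 1 / k ^ 2)
    measurableSet_Ioi]
  · refine lintegral_congr fun k ↦ ?_
    rw [abs_of_nonneg (by positivity)]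
  · intro k hk
    simpa [one_div] using ((hasDerivAt_inv (hpos k hk).ne').const_sub 1).hasDerivWithinAt
      (s := Ioi (1 / 2 : ℝ))
  · intro k _ l _ hkl
    simpa using hkl

lemma ae_Ioi_of_ae_Ioo {p : ℝ → Prop} (hp : ∀ᵐ t ∂volume.restrict (Ioo (-1) 1), p t) :
    ∀ᵐ k ∂volume.restrict (Ioi (1 / 2 : ℝ)), p (1 - 1 / k) := by
  obtain ⟨Z, hZp, hZ, hZ0⟩ := exists_measurable_superset_of_null (ae_iff.1 hp)
  have h := lintegral_Ioo_eq_lintegral_Ioi (Z.indicator 1)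
  have hZm : Measurable (Z.indicator (1 : ℝ → ℝ≥0∞)) := measurable_one.indicator hZ
  rw [lintegral_indicator_one hZ, hZ0, eq_comm, lintegral_eq_zero_iff (by fun_prop)] at h
  filter_upwards [h, ae_restrict_mem measurableSet_Ioi] with k hk hk2
  by_contra hnp
  have hk0 : 0 < k := lt_trans (by norm_num) (mem_Ioi.1 hk2)
  have hmem : 1 - 1 / k ∈ Z := hZp hnp
  simp only [indicator_of_mem hmem, Pi.one_apply, mul_one, Pi.zero_apply,
    ENNReal.ofReal_eq_zero] at hk
  exact absurd hk (not_le.2 (by positivity))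

lemma ae_Ioo_of_ae_Ioi {p : ℝ → Prop} (hpm : MeasurableSet {t | p t})
    (hp : ∀ᵐ k ∂volume.restrict (Ioi (1 / 2 : ℝ)), p (1 - 1 / k)) :
    ∀ᵐ t ∂volume.restrict (Ioo (-1) 1), p t := by
  have h := lintegral_Ioo_eq_lintegral_Ioi ({t | p t}ᶜ.indicator 1)
  rw [lintegral_indicator_one hpm.compl] at h
  rw [ae_iff]
  refine Eq.trans h ?_
  rw [lintegral_eq_zero_of_ae_eq_zero]
  filter_upwards [hp] with k hk
  simp only [Pi.zero_apply, mul_eq_zero, indicator_apply_eq_zero]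
  exact Or.inr fun h ↦ absurd hk h

lemma cuspDensity_one_sub {c k : ℝ} (hk : 1 / 2 < k) :
    ENNReal.ofReal (1 / k ^ 2) * cuspDensity c (1 - 1 / k)
      = ENNReal.ofReal (c / (2 * k - 1)) := by
  have hk0 : 0 < k := by linarith
  have h2 : 0 < 2 * k - 1 := by linarith
  unfold cuspDensity
  rw [← ENNReal.ofReal_mul (by positivity)]
  congr 1
  have : 1 - (1 - 1 / k) ^ 2 = (2 * k - 1) / k ^ 2 := by field_simp; ring
  rw [this, abs_of_pos (by positivity)]
  field_simp

namespace IsSubinvariant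

variable {β : ℝ} {w : ℝ → ℝ≥0∞}

lemma ae_lt_cuspDensity_of_one (hw : IsSubinvariant 1 w) {c : ℝ} (hc : 0 < c) :
    ∀ᵐ t ∂volume.restrict (Ioo (-1) 1), w t < cuspDensity c t := by
  refine ae_Ioo_of_ae_Ioi (measurableSet_lt hw.measurable (measurable_cuspDensity c)) ?_
  set g : ℝ → ℝ≥0∞ := (Ioi (1 / 2 : ℝ)).indicator
    fun k ↦ ENNReal.ofReal (1 / k ^ 2) * w (1 - 1 / k) with hg
  have hwm := hw.measurable
  have hgm : Measurable g := Measurable.indicator (by fun_prop) measurableSet_Ioi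
  have hgfin : ∫⁻ x, g x ≠ ∞ := by
    rw [hg, lintegral_indicator measurableSet_Ioi, ← lintegral_Ioo_eq_lintegral_Ioi w]
    exact ne_top_of_le_ne_top hw.lintegral_ne_top (setLIntegral_le_lintegral _ _)
  have hstep : ∀ᵐ k : ℝ, 1 / 2 < k → cuspDensity c (1 - 1 / k) ≤ w (1 - 1 / k) →
      cuspDensity c (1 - 1 / (k + 1)) ≤ w (1 - 1 / (k + 1)) := by
    have h := ae_Ioi_of_ae_Ioo (hw.ae_cuspDensity_le_comp hc)
    rw [ae_restrict_iff' measurableSet_Ioi] at h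
    filter_upwards [h] with k hk hk2 hle
    have h0 : 0 < k := by linarith
    have : 1 / (2 - (1 - 1 / k)) = 1 - 1 / (k + 1) := by
      have : 2 - (1 - 1 / k) = (k + 1) / k := by field_simp; ring
      rw [this]
      field_simp
      ring
    rw [← this]
    exact hk hk2 hle
  have hshift : ∀ᵐ k : ℝ, ∀ n : ℕ, 1 / 2 < k + n →
      cuspDensity c (1 - 1 / (k + n)) ≤ w (1 - 1 / (k + n)) →
      cuspDensity c (1 - 1 / (k + n + 1)) ≤ w (1 - 1 / (k + n + 1)) :=
    ae_all_iff.2 fun n ↦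
      (measurePreserving_add_right volume (n : ℝ)).quasiMeasurePreserving.ae hstep
  rw [ae_restrict_iff' measurableSet_Ioi]
  filter_upwards [hshift, ae_tsum_nat_translate_ne_top hgm hgfin] with k hk hfin hk2
  by_contra! hle
  have hk2n : ∀ n : ℕ, 1 / 2 < k + n := fun n ↦ by
    have : (0 : ℝ) ≤ n := n.cast_nonneg
    linarith [mem_Ioi.1 hk2]
  have hall : ∀ n : ℕ, cuspDensity c (1 - 1 / (k + n)) ≤ w (1 - 1 / (k + n)) := by
    intro n
    induction n with
    | zero => simpa using hle
    | succ n ih =>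
      push_cast
      rw [← add_assoc]
      exact hk n (hk2n n) ih
  refine hfin (top_unique ?_)
  rw [← tsum_ofReal_div_two_mul_sub_one_eq_top hc (mem_Ioi.1 hk2)]
  refine ENNReal.tsum_le_tsum fun n ↦ ?_
  rw [hg, indicator_of_mem (mem_Ioi.2 (hk2n n)), ← cuspDensity_one_sub (hk2n n)]
  gcongr
  exact hall n

/-- A subinvariant density vanishes when `β ≤ 1`. -/
theorem ae_eq_zero (hw : IsSubinvariant β w) (hβ : 0 < β) (hβ1 : β ≤ 1) : w =ᵐ[volume] 0 := by
  have hle : ∀ c : ℝ, 0 < c → ∀ᵐ t ∂volume.restrict (Ioo (-1) 1), w t ≤ cuspDensity c t := by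
    intro c hc
    rcases hβ1.lt_or_eq with h | rfl
    · exact hw.ae_le_cuspDensity_of_lt_one hβ h hc
    · exact (hw.ae_lt_cuspDensity_of_one hc).mono fun _ ↦ le_of_lt
  have hinner : ∀ᵐ t ∂volume.restrict (Ioo (-1) 1), w t = 0 := by
    have h := ae_all_iff.2 fun n : ℕ ↦ hle (1 / ((n : ℝ) + 1)) Nat.one_div_pos_of_nat
    filter_upwards [h] with t ht
    have hlim : Filter.Tendsto (fun n : ℕ ↦ cuspDensity (1 / ((n : ℝ) + 1)) t) Filter.atTop
        (nhds 0) := by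
      unfold cuspDensity
      rw [← ENNReal.ofReal_zero, ← zero_div |1 - t ^ 2|]
      exact ENNReal.tendsto_ofReal (tendsto_one_div_add_atTop_nhds_zero_nat.div_const _)
    exact le_antisymm (ge_of_tendsto' hlim ht) zero_le
  have hI : ∫⁻ t in Ioo (-1) 1, w t = 0 := lintegral_eq_zero_of_ae_eq_zero hinner
  rw [← lintegral_eq_zero_iff hw.measurable, ← lintegral_Ioo_add_lintegral_one_lt_abs, hI, add_zero,
    ← nonpos_iff_eq_zero, ← hI]
  calc ∫⁻ x in {x : ℝ | 1 < |x|}, w x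
      = ∫⁻ x in {x : ℝ | 1 < |x|}, ENNReal.ofReal (β / x ^ 2) * w (β / x) :=
        setLIntegral_congr_fun (measurableSet_lt measurable_const (by fun_prop))
          fun x hx ↦ (hw.inversion x (by rintro rfl; norm_num at hx)).symm
    _ = ∫⁻ s in Ioo (-β) β, w s := lintegral_one_lt_abs_inversion hβ w
    _ ≤ _ := lintegral_mono_set (Ioo_subset_Ioo (by linarith) hβ1)

end IsSubinvariant

lemma integral_continuousMap_addCircle_mul_eq_zero {F : ℝ → ℂ} (hF : Integrable F)
    (h : ∀ m : ℤ, ∫ t : ℝ, Complex.exp (Complex.I * π * m * t) * F t = 0)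
    (ψ : C(AddCircle (2 : ℝ), ℂ)) : ∫ t : ℝ, ψ (t : AddCircle (2 : ℝ)) * F t = 0 := by
  have : Fact ((0 : ℝ) < 2) := ⟨two_pos⟩
  have hint : ∀ ψ : C(AddCircle (2 : ℝ), ℂ),
      Integrable fun t : ℝ ↦ ψ (t : AddCircle (2 : ℝ)) * F t := fun ψ ↦
    hF.bdd_mul (ψ.continuous.comp (AddCircle.continuous_mk' 2)).aestronglyMeasurable
      (Filter.Eventually.of_forall fun t ↦ ψ.norm_coe_le_norm _)
  let L : C(AddCircle (2 : ℝ), ℂ) →ₗ[ℂ] ℂ :=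
    { toFun := fun ψ ↦ ∫ t : ℝ, ψ (t : AddCircle (2 : ℝ)) * F t
      map_add' := fun ψ₁ ψ₂ ↦ by
        simp only [ContinuousMap.add_apply, add_mul]
        exact integral_add (hint ψ₁) (hint ψ₂)
      map_smul' := fun a ψ ↦ by
        simp only [ContinuousMap.smul_apply, smul_eq_mul, mul_assoc, RingHom.id_apply]
        exact integral_const_mul a _ }
  let L' : C(AddCircle (2 : ℝ), ℂ) →L[ℂ] ℂ := L.mkContinuous (∫ t, ‖F t‖) fun ψ ↦ by
    refine (norm_integral_le_integral_norm _).trans ?_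
    rw [mul_comm, ← integral_const_mul]
    refine integral_mono (hint ψ).norm (hF.norm.const_mul _) fun t ↦ ?_
    simp only [norm_mul]
    gcongr
    exact ψ.norm_coe_le_norm _
  have hker : (Submodule.span ℂ (range (@fourier 2))).topologicalClosure ≤
      L'.toLinearMap.ker := by
    refine Submodule.topologicalClosure_minimal _ ?_ L'.isClosed_ker
    rw [Submodule.span_le]
    rintro _ ⟨m, rfl⟩
    change ∫ t : ℝ, fourier m (t : AddCircle (2 : ℝ)) * F t = 0
    rw [← h m]
    congr 1
    ext t
    rw [fourier_coe_apply]
    congr 2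
    push_cast
    ring
  rw [span_fourier_closure_eq_top] at hker
  exact hker (Submodule.mem_top (x := ψ))

/-- If the Fourier coefficients of the periodization of `F` vanish, so does the periodization. -/
lemma ae_tsum_translate_eq_zero {F : ℝ → ℂ} (hFm : Measurable F) (hF : Integrable F)
    (h : ∀ m : ℤ, ∫ t : ℝ, Complex.exp (Complex.I * π * m * t) * F t = 0) :
    ∀ᵐ t ∂volume.restrict (Ioo (-1) 1), ∑' j : ℤ, F (t + j * 2) = 0 := by
  have : Fact ((0 : ℝ) < 2) := ⟨two_pos⟩
  have hI : (-1 : ℝ) + 2 = 1 := by norm_num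
  have hFj : ∀ j : ℤ, Integrable fun t ↦ F (t + j * 2) := fun j ↦ hF.comp_add_right _
  have hsum : Summable fun j : ℤ ↦ ∫ t in Ioc (-1 : ℝ) 1, ‖F (t + j * 2)‖ := by
    have := (hasSum_integral_translate hF.norm (-1) two_pos).summable
    rwa [hI] at this
  have hlint : IntegrableOn (fun t ↦ ∑' j : ℤ, F (t + j * 2)) (Ioc (-1) 1) := by
    have hmeas : ∀ j : ℤ, Measurable fun t ↦ F (t + j * 2) := fun j ↦
      hFm.comp (measurable_id.add_const _)
    refine ⟨(Measurable.tsum hmeas).aestronglyMeasurable, ?_⟩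
    refine (lintegral_mono fun t ↦ enorm_tsum_le_tsum_enorm).trans_lt ?_
    rw [lintegral_tsum fun j ↦ (hmeas j).enorm.aemeasurable]
    have := lintegral_eq_tsum_lintegral_translate (fun x ↦ ‖F x‖ₑ) (-1) two_pos
    rw [hI] at this
    rw [← this]
    exact hF.2
  rw [ae_restrict_iff' measurableSet_Ioo]
  refine isOpen_Ioo.ae_eq_zero_of_integral_contDiff_smul_eq_zero
    (hlint.mono_set Ioo_subset_Ioc_self).locallyIntegrableOn fun g hg hgk hgs ↦ ?_
  have hg0 : ∀ t ∉ Ioo (-1 : ℝ) 1, g t = 0 := fun t ht ↦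
    image_eq_zero_of_notMem_tsupport fun hmem ↦ ht (hgs hmem)
  have hgc : Continuous fun t ↦ (g t : ℂ) := Complex.continuous_ofReal.comp hg.continuous
  let ψ : C(AddCircle (2 : ℝ), ℂ) := ⟨AddCircle.liftIoc 2 (-1) fun t ↦ (g t : ℂ),
    AddCircle.liftIoc_continuous (by
      rw [hg0 (-1) (by simp), hg0 (-1 + 2) (by norm_num)]) hgc.continuousOn⟩
  have hψ : ∀ t ∈ Ioc (-1 : ℝ) 1, ∀ j : ℤ, ψ ((t + j * 2 : ℝ) : AddCircle (2 : ℝ)) = g t := by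
    intro t ht j
    have : ((t + j * 2 : ℝ) : AddCircle (2 : ℝ)) = (t : AddCircle (2 : ℝ)) := by
      rw [← zsmul_eq_mul]
      simp
    rw [this]
    exact AddCircle.liftIoc_coe_apply (f := fun t ↦ (g t : ℂ)) (by rwa [hI])
  obtain ⟨C, hC⟩ : ∃ C, ∀ t, ‖(g t : ℂ)‖ ≤ C := by
    simpa using hg.continuous.bounded_above_of_compact_support hgk
  have hψF := hasSum_integral_translate (g := fun t ↦ ψ (t : AddCircle (2 : ℝ)) * F t)
    (hF.bdd_mul (ψ.continuous.comp (AddCircle.continuous_mk' 2)).aestronglyMeasurable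
      (Filter.Eventually.of_forall fun t ↦ ψ.norm_coe_le_norm _)) (-1) two_pos
  rw [hI, integral_continuousMap_addCircle_mul_eq_zero hF h ψ] at hψF
  have hgF := hasSum_integral_of_summable_integral_norm
    (μ := volume.restrict (Ioc (-1 : ℝ) 1)) (F := fun (j : ℤ) t ↦ (g t : ℂ) * F (t + j * 2))
    (fun j ↦ ((hFj j).bdd_mul hgc.aestronglyMeasurable (Filter.Eventually.of_forall hC)).restrict)
    (by
      refine Summable.of_nonneg_of_le (fun j ↦ integral_nonneg fun t ↦ norm_nonneg _)
        (fun j ↦ ?_) (hsum.mul_left C)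
      rw [← integral_const_mul]
      refine integral_mono ((hFj j).bdd_mul hgc.aestronglyMeasurable
        (Filter.Eventually.of_forall hC)).restrict.norm ((hFj j).norm.restrict.const_mul _)
        fun t ↦ ?_
      simp only [norm_mul]
      gcongr
      exact hC t)
  have heq : ∀ j : ℤ, ∫ t in Ioc (-1 : ℝ) 1, ψ ((t + j * 2 : ℝ) : AddCircle (2 : ℝ)) * F (t + j * 2)
      = ∫ t in Ioc (-1 : ℝ) 1, (g t : ℂ) * F (t + j * 2) := fun j ↦
    setIntegral_congr_fun measurableSet_Ioc fun t ht ↦ by simp only [hψ t ht j]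
  simp_rw [heq] at hψF
  rw [← setIntegral_eq_integral_of_forall_compl_eq_zero (s := Ioc (-1 : ℝ) 1),
    ← hgF.unique hψF]
  · refine integral_congr_ae (Filter.Eventually.of_forall fun t ↦ ?_)
    simp only [Complex.real_smul, tsum_mul_left]
  · intro t ht
    rw [hg0 t fun h ↦ ht (Ioo_subset_Ioc_self h), zero_smul]

lemma ae_enorm_le_foldSum {F : ℝ → ℂ} (hFm : Measurable F) (hF : Integrable F)
    (h : ∀ m : ℤ, ∫ t : ℝ, Complex.exp (Complex.I * π * m * t) * F t = 0) :
    ∀ᵐ t ∂volume.restrict (Ioo (-1) 1), ‖F t‖ₑ ≤ foldSum (fun x ↦ ‖F x‖ₑ) t := by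
  filter_upwards [ae_tsum_translate_eq_zero hFm hF h] with t ht
  by_cases htop : foldSum (fun x ↦ ‖F x‖ₑ) t = ∞
  · rw [htop]
    exact le_top
  unfold foldSum at htop ⊢
  rw [ENNReal.tsum_add] at htop ⊢
  obtain ⟨h1, h2⟩ := ENNReal.add_ne_top.1 htop
  have e1 : ∀ k : ℕ, F (t + 2 * (k + 1)) = F (t + ((k : ℤ) + 1 : ℤ) * 2) := fun k ↦ by
    congr 1; push_cast; ring
  have e2 : ∀ k : ℕ, F (t - 2 * (k + 1)) = F (t + (-((k : ℤ) + 1) : ℤ) * 2) := fun k ↦ by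
    congr 1; push_cast; ring
  simp_rw [e1] at h1 ⊢
  simp_rw [e2] at h2 ⊢
  rw [tsum_of_add_one_of_neg_add_one (f := fun j : ℤ ↦ F (t + j * 2))
    (tsum_enorm_ne_top_iff_summable_norm.1 h1).of_norm
    (tsum_enorm_ne_top_iff_summable_norm.1 h2).of_norm] at ht
  simp only [Int.cast_zero, zero_mul, add_zero] at ht
  rw [show F t = -(∑' k : ℕ, F (t + ((k : ℤ) + 1 : ℤ) * 2)
    + ∑' k : ℕ, F (t + (-((k : ℤ) + 1) : ℤ) * 2)) by linear_combination ht, enorm_neg]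
  exact (enorm_add_le _ _).trans (add_le_add enorm_tsum_le_tsum_enorm enorm_tsum_le_tsum_enorm)

lemma image_div_compl_zero {β : ℝ} (hβ : 0 < β) :
    (fun x : ℝ ↦ β / x) '' {0}ᶜ = {0}ᶜ := by
  ext y
  simp only [mem_image, mem_compl_iff, mem_singleton_iff]
  constructor
  · rintro ⟨x, hx, rfl⟩
    exact div_ne_zero hβ.ne' hx
  · exact fun hy ↦ ⟨β / y, div_ne_zero hβ.ne' hy, div_div_cancel₀ hβ.ne'⟩

lemma injOn_div_compl_zero {β : ℝ} (hβ : 0 < β) :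
    InjOn (fun x : ℝ ↦ β / x) {0}ᶜ := by
  intro x _ y _ hxy
  have : β / (β / x) = β / (β / y) := congrArg (β / ·) hxy
  rwa [div_div_cancel₀ hβ.ne', div_div_cancel₀ hβ.ne'] at this

lemma hasDerivWithinAt_div_compl_zero (β : ℝ) :
    ∀ x ∈ ({0}ᶜ : Set ℝ), HasDerivWithinAt (fun x : ℝ ↦ β / x) (-β / x ^ 2) {0}ᶜ x := by
  intro x hx
  simpa [div_eq_mul_inv, neg_mul] using ((hasDerivAt_inv hx).const_mul β).hasDerivWithinAt

/-- The change of variables `s = β / x` on the real line. -/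
lemma integral_inversion {β : ℝ} (hβ : 0 < β) (g : ℝ → ℂ) :
    ∫ x, ((β / x ^ 2 : ℝ) : ℂ) * g (β / x) = ∫ s, g s := by
  have := integral_image_eq_integral_abs_deriv_smul (measurableSet_singleton (0 : ℝ)).compl
    (hasDerivWithinAt_div_compl_zero β) (injOn_div_compl_zero hβ) g
  rw [image_div_compl_zero hβ, restrict_compl_singleton] at this
  rw [this]
  congr 1
  ext x
  rw [abs_div, abs_neg, abs_of_pos hβ, abs_of_nonneg (sq_nonneg x), Complex.real_smul]

lemma integrable_inversion {β : ℝ} (hβ : 0 < β) {g : ℝ → ℂ} (hg : Integrable g) :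
    Integrable fun x ↦ ((β / x ^ 2 : ℝ) : ℂ) * g (β / x) := by
  have := integrableOn_image_iff_integrableOn_abs_deriv_smul
    (measurableSet_singleton (0 : ℝ)).compl
    (hasDerivWithinAt_div_compl_zero β) (injOn_div_compl_zero hβ) g
  rw [image_div_compl_zero hβ, IntegrableOn, IntegrableOn, restrict_compl_singleton] at this
  refine (this.1 hg).congr (Filter.Eventually.of_forall fun x ↦ ?_)
  simp only [abs_div, abs_neg, abs_of_pos hβ, abs_of_nonneg (sq_nonneg x), Complex.real_smul]

lemma ae_restrict_Ioo_comp_neg {p : ℝ → Prop} (h : ∀ᵐ t ∂volume.restrict (Ioo (-1 : ℝ) 1), p t) :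
    ∀ᵐ t ∂volume.restrict (Ioo (-1 : ℝ) 1), p (-t) := by
  rw [ae_restrict_iff' measurableSet_Ioo] at h ⊢
  filter_upwards [(Measure.measurePreserving_neg volume).quasiMeasurePreserving.ae h] with t ht hm
  exact ht ⟨by linarith [hm.2], by linarith [hm.1]⟩

/-- The symmetrization of `|F|` under the inversion `x ↦ b / x` and the reflection `x ↦ -x`. -/
lemma isSubinvariant_of_integral_eq_zero {b : ℝ} (hb : 0 < b) {F : ℝ → ℂ} (hFm : Measurable F)
    (hF : Integrable F)
    (h₁ : ∀ m : ℤ, ∫ t : ℝ, Complex.exp (Complex.I * π * m * t) * F t = 0)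
    (h₂ : ∀ m : ℤ, ∫ t : ℝ, Complex.exp (Complex.I * π * m * (b / t : ℝ)) * F t = 0) :
    IsSubinvariant b fun x ↦ (‖F x‖ₑ + ‖((b / x ^ 2 : ℝ) : ℂ) * F (b / x)‖ₑ)
      + (‖F (-x)‖ₑ + ‖((b / (-x) ^ 2 : ℝ) : ℂ) * F (b / -x)‖ₑ) := by
  set G : ℝ → ℂ := fun x ↦ ((b / x ^ 2 : ℝ) : ℂ) * F (b / x) with hGdef
  have hG : Integrable G := integrable_inversion hb hF
  have hGm : Measurable G := by fun_prop
  have hG₁ : ∀ m : ℤ, ∫ t : ℝ, Complex.exp (Complex.I * π * m * t) * G t = 0 := fun m ↦ by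
    rw [← h₂ m, ← integral_inversion hb fun t ↦ Complex.exp (Complex.I * π * m * (b / t : ℝ)) * F t]
    congr 1
    ext t
    rw [div_div_cancel₀ hb.ne', hGdef]
    ring
  have hFG : ∀ x ≠ 0, ENNReal.ofReal (b / x ^ 2) * ‖F (b / x)‖ₑ = ‖G x‖ₑ := fun x hx ↦ by
    rw [hGdef, enorm_mul, ← ofReal_norm ((b / x ^ 2 : ℝ) : ℂ), Complex.norm_of_nonneg (by positivity)]
  have hGF : ∀ x ≠ 0, ENNReal.ofReal (b / x ^ 2) * ‖G (b / x)‖ₑ = ‖F x‖ₑ := fun x hx ↦ by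
    rw [← hFG _ (div_ne_zero hb.ne' hx), ← mul_assoc, ← ENNReal.ofReal_mul (by positivity),
      div_div_cancel₀ hb.ne', show b / x ^ 2 * (b / (b / x) ^ 2) = 1 by field_simp,
      ENNReal.ofReal_one, one_mul]
  have hF_le := ae_enorm_le_foldSum hFm hF h₁
  have hG_le := ae_enorm_le_foldSum hGm hG hG₁
  change IsSubinvariant b fun x ↦ (‖F x‖ₑ + ‖G x‖ₑ) + (‖F (-x)‖ₑ + ‖G (-x)‖ₑ)
  refine ⟨by fun_prop, ?_, fun x hx ↦ ?_, fun x ↦ ?_, ?_⟩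
  · have hF' := hF.comp_neg
    have hG' := hG.comp_neg
    rw [lintegral_add_left (by fun_prop), lintegral_add_left (by fun_prop),
      lintegral_add_left (by fun_prop)]
    exact ENNReal.add_ne_top.2 ⟨ENNReal.add_ne_top.2 ⟨hF.2.ne, hG.2.ne⟩,
      ENNReal.add_ne_top.2 ⟨hF'.2.ne, hG'.2.ne⟩⟩
  · have hF' := hFG (-x) (neg_ne_zero.2 hx)
    have hG' := hGF (-x) (neg_ne_zero.2 hx)
    rw [neg_sq, div_neg] at hF' hG'
    simp only [mul_add]
    rw [hFG x hx, hGF x hx, hF', hG', add_comm ‖G x‖ₑ, add_comm ‖G (-x)‖ₑ]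
  · rw [neg_neg, add_comm]
  · filter_upwards [hF_le, hG_le, ae_restrict_Ioo_comp_neg hF_le, ae_restrict_Ioo_comp_neg hG_le]
      with t h1 h2 h3 h4
    rw [foldSum_add (fun x ↦ ‖F x‖ₑ + ‖G x‖ₑ) (fun x ↦ ‖F (-x)‖ₑ + ‖G (-x)‖ₑ),
      foldSum_add (fun x ↦ ‖F x‖ₑ) (fun x ↦ ‖G x‖ₑ),
      foldSum_add (fun x ↦ ‖F (-x)‖ₑ) (fun x ↦ ‖G (-x)‖ₑ),
      foldSum_comp_neg (fun x ↦ ‖F x‖ₑ), foldSum_comp_neg (fun x ↦ ‖G x‖ₑ)]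
    gcongr

/-- The normalized uniqueness statement, in which the first progression has period `2`. -/
lemma ae_eq_zero_of_integral_eq_zero {b : ℝ} (hb : 0 < b) (hb1 : b ≤ 1) {F : ℝ → ℂ}
    (hF : Integrable F)
    (h₁ : ∀ m : ℤ, ∫ t : ℝ, Complex.exp (Complex.I * π * m * t) * F t = 0)
    (h₂ : ∀ m : ℤ, ∫ t : ℝ, Complex.exp (Complex.I * π * m * (b / t : ℝ)) * F t = 0) :
    F =ᵐ[volume] 0 := by
  have hmk := hF.1.ae_eq_mk
  have hcongr : ∀ g : ℝ → ℂ, ∫ t, g t * hF.1.mk F t = ∫ t, g t * F t := fun g ↦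
    integral_congr_ae (hmk.mono fun t ht ↦ by simp only [ht])
  have hw := (isSubinvariant_of_integral_eq_zero hb hF.1.stronglyMeasurable_mk.measurable
    (hF.congr hmk) (fun m ↦ (hcongr _).trans (h₁ m)) fun m ↦ (hcongr _).trans (h₂ m)).ae_eq_zero
    hb hb1
  filter_upwards [hmk, hw] with t ht hwt
  rw [ht]
  simp only [Pi.zero_apply, add_eq_zero, enorm_eq_zero] at hwt
  exact hwt.1.1

/-- The Poisson kernel of the upper half-plane, without its normalizing constant. -/
noncomputable def poissonBump (y t : ℝ) : ℝ := y / (t ^ 2 + y ^ 2)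

lemma integrable_poissonBump {y : ℝ} (hy : 0 < y) : Integrable (poissonBump y) := by
  refine ((integrable_inv_one_add_sq.comp_div hy.ne').const_mul y⁻¹).congr
    (Filter.Eventually.of_forall fun t ↦ ?_)
  simp only [poissonBump]
  field_simp
  ring

lemma continuous_poissonBump {y : ℝ} (hy : 0 < y) : Continuous (poissonBump y) :=
  continuous_const.div (by fun_prop) fun t ↦ by positivity

lemma integral_exp_mul_poissonBump_sub {y : ℝ} (hy : 0 < y) (m : ℤ) :
    ∫ t : ℝ, Complex.exp (Complex.I * π * m * t)
      * ((poissonBump y (t + 1) - poissonBump y (t - 1) : ℝ) : ℂ) = 0 := by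
  have hp : Integrable fun t : ℝ ↦ Complex.exp (Complex.I * π * m * t) * (poissonBump y t : ℂ) := by
    refine (integrable_poissonBump hy).ofReal.bdd_mul (c := 1) (by fun_prop)
      (Filter.Eventually.of_forall fun t ↦ ?_)
    rw [show Complex.I * π * m * t = ((π * m * t : ℝ) : ℂ) * Complex.I by push_cast; ring,
      Complex.norm_exp_ofReal_mul_I]
  have hexp : Complex.exp (Complex.I * π * m) * Complex.exp (Complex.I * π * m) = 1 := by
    rw [← Complex.exp_add, show Complex.I * π * m + Complex.I * π * m = m * (2 * π * Complex.I) by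
      ring, Complex.exp_int_mul_two_pi_mul_I]
  have hshift : ∀ t : ℝ, Complex.exp (Complex.I * π * m * t)
      * ((poissonBump y (t + 1) - poissonBump y (t - 1) : ℝ) : ℂ)
      = Complex.exp (Complex.I * π * m) * (Complex.exp (Complex.I * π * m * (t + 1 : ℝ))
          * (poissonBump y (t + 1) : ℂ))
        - Complex.exp (Complex.I * π * m) * (Complex.exp (Complex.I * π * m * (t - 1 : ℝ))
          * (poissonBump y (t - 1) : ℂ)) := fun t ↦ by
    have h₁ : Complex.exp (Complex.I * π * m * (t + 1 : ℝ))
        = Complex.exp (Complex.I * π * m * t) * Complex.exp (Complex.I * π * m) := by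
      rw [← Complex.exp_add]
      congr 1
      push_cast
      ring
    have h₂ : Complex.exp (Complex.I * π * m * t)
        = Complex.exp (Complex.I * π * m * (t - 1 : ℝ)) * Complex.exp (Complex.I * π * m) := by
      rw [← Complex.exp_add]
      congr 1
      push_cast
      ring
    rw [h₁]
    push_cast at h₂ ⊢
    linear_combination (-Complex.exp (Complex.I * π * m * t) * (poissonBump y (t + 1) : ℂ)) * hexp
      - (poissonBump y (t - 1) : ℂ) * h₂
  simp_rw [hshift]
  rw [integral_sub ((hp.comp_add_right 1).const_mul _) ((hp.comp_sub_right 1).const_mul _),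
    integral_const_mul, integral_const_mul,
    integral_add_right_eq_self (fun t : ℝ ↦ Complex.exp (Complex.I * π * m * t)
      * (poissonBump y t : ℂ)),
    integral_sub_right_eq_self (fun t : ℝ ↦ Complex.exp (Complex.I * π * m * t)
      * (poissonBump y t : ℂ)), sub_self]

lemma poissonBump_sub_inversion {y : ℝ} (hy : 0 < y) {s : ℝ} (hs : s ≠ 0) :
    (1 + y ^ 2) / s ^ 2 *
      (poissonBump y ((1 + y ^ 2) / s + 1) - poissonBump y ((1 + y ^ 2) / s - 1))
      = poissonBump y (s + 1) - poissonBump y (s - 1) := by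
  have hplus : (1 + y ^ 2) / s ^ 2 * poissonBump y ((1 + y ^ 2) / s + 1)
      = poissonBump y (s + 1) := by
    have h : ((1 + y ^ 2) / s + 1) ^ 2 + y ^ 2
        = (1 + y ^ 2) / s ^ 2 * ((s + 1) ^ 2 + y ^ 2) := by
      field_simp
      ring
    rw [poissonBump, poissonBump, h, ← mul_div_assoc, mul_div_mul_left _ _ (by positivity)]
  have hminus : (1 + y ^ 2) / s ^ 2 * poissonBump y ((1 + y ^ 2) / s - 1)
      = poissonBump y (s - 1) := by
    have h : ((1 + y ^ 2) / s - 1) ^ 2 + y ^ 2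
        = (1 + y ^ 2) / s ^ 2 * ((s - 1) ^ 2 + y ^ 2) := by
      field_simp
      ring
    rw [poissonBump, poissonBump, h, ← mul_div_assoc, mul_div_mul_left _ _ (by positivity)]
  rw [mul_sub, hplus, hminus]

/-- The difference of shifted Poisson kernels witnesses non-uniqueness for `b = 1 + y ^ 2 > 1`. -/
lemma integral_exp_inversion_mul_poissonBump_sub {y : ℝ} (hy : 0 < y) (m : ℤ) :
    ∫ t : ℝ, Complex.exp (Complex.I * π * m * ((1 + y ^ 2) / t : ℝ))
      * ((poissonBump y (t + 1) - poissonBump y (t - 1) : ℝ) : ℂ) = 0 := by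
  rw [← integral_exp_mul_poissonBump_sub hy m, ← integral_inversion (β := 1 + y ^ 2)
    (by positivity) fun t ↦ Complex.exp (Complex.I * π * m * t)
      * ((poissonBump y (t + 1) - poissonBump y (t - 1) : ℝ) : ℂ)]
  refine integral_congr_ae ?_
  filter_upwards [Measure.ae_ne volume (0 : ℝ)] with t ht
  rw [← poissonBump_sub_inversion hy ht]
  push_cast
  ring

lemma integral_comp_mul_left_eq_zero_iff {α : ℝ} (hα : 0 < α) (g : ℝ → ℂ) :
    ∫ t, g (α * t) = 0 ↔ ∫ t, g t = 0 := by
  rw [Measure.integral_comp_mul_left, smul_eq_zero_iff_right]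
  exact abs_ne_zero.2 (inv_pos.2 hα).ne.symm

/-- The full lattice-cross Heisenberg uniqueness theorem for the hyperbola
(Hedenmalm–Montes): with `M = 2π` normalized away, `(Γ, Λ_{α,β})` is a
Heisenberg uniqueness pair iff `αβ ≤ 1`. -/
theorem stmt_0 (α β : ℝ) (hα : 0 < α) (hβ : 0 < β) :
    α * β ≤ 1 ↔
      ∀ f : ℝ → ℂ, Integrable f →
        (∀ m : ℤ, ∫ t : ℝ, Complex.exp (Complex.I * π * α * m * t) * f t = 0) →
        (∀ n : ℤ, ∫ t : ℝ, Complex.exp (-(Complex.I * π * β * n) / t) * f t = 0) →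
        f =ᵐ[volume] 0 := by
  have hrescale₁ : ∀ (F : ℝ → ℂ) (m : ℤ),
      ∫ t : ℝ, Complex.exp (Complex.I * π * α * m * t) * F (α * t) = 0 ↔
        ∫ t : ℝ, Complex.exp (Complex.I * π * m * t) * F t = 0 := fun F m ↦ by
    rw [← integral_comp_mul_left_eq_zero_iff hα
      fun t : ℝ ↦ Complex.exp (Complex.I * π * m * t) * F t]
    have : ∀ t : ℝ, Complex.I * π * m * ((α * t : ℝ) : ℂ) = Complex.I * π * α * m * t := fun t ↦ by
      push_cast
      ring
    simp_rw [this]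
  have hrescale₂ : ∀ (F : ℝ → ℂ) (n : ℤ),
      ∫ t : ℝ, Complex.exp (-(Complex.I * π * β * n) / t) * F (α * t) = 0 ↔
        ∫ t : ℝ, Complex.exp (Complex.I * π * (-n : ℤ) * (α * β / t : ℝ)) * F t = 0 := fun F n ↦ by
    rw [← integral_comp_mul_left_eq_zero_iff hα
      fun t : ℝ ↦ Complex.exp (Complex.I * π * (-n : ℤ) * (α * β / t : ℝ)) * F t]
    have : ∀ t : ℝ, Complex.I * π * (-n : ℤ) * ((α * β / (α * t) : ℝ) : ℂ)
        = -(Complex.I * π * β * n) / t := fun t ↦ by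
      rw [mul_div_mul_left _ _ hα.ne']
      push_cast
      ring
    simp_rw [this]
  constructor
  · intro h f hf h₁ h₂
    obtain ⟨F, hFdef⟩ : ∃ F : ℝ → ℂ, F = fun x ↦ f (x / α) := ⟨_, rfl⟩
    have hfF : f = fun t ↦ F (α * t) := by
      simp only [hFdef, mul_div_cancel_left₀ _ hα.ne']
    have hFint : Integrable F := hFdef ▸ hf.comp_div hα.ne'
    subst hfF
    have hF := ae_eq_zero_of_integral_eq_zero (mul_pos hα hβ) h hFint
      (fun m ↦ (hrescale₁ _ m).1 (h₁ m))
      (fun m ↦ by simpa only [neg_neg] using (hrescale₂ _ (-m)).1 (h₂ (-m)))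
    have hq : Measure.QuasiMeasurePreserving (fun t : ℝ ↦ α * t) volume volume :=
      ⟨by fun_prop, by
        rw [Real.map_volume_mul_left hα.ne']
        exact Measure.smul_absolutelyContinuous⟩
    exact hq.ae hF
  · intro h
    by_contra! hlt
    obtain ⟨y, hy, hyb⟩ : ∃ y : ℝ, 0 < y ∧ α * β = 1 + y ^ 2 :=
      ⟨√(α * β - 1), Real.sqrt_pos.2 (by linarith), by
        rw [Real.sq_sqrt (by linarith)]
        ring⟩
    let F : ℝ → ℂ := fun t ↦ ((poissonBump y (t + 1) - poissonBump y (t - 1) : ℝ) : ℂ)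
    have hcont : Continuous F := Complex.continuous_ofReal.comp
      (((continuous_poissonBump hy).comp (by fun_prop)).sub
        ((continuous_poissonBump hy).comp (by fun_prop)))
    have hF : Integrable F := (((integrable_poissonBump hy).comp_add_right 1).sub
      ((integrable_poissonBump hy).comp_sub_right 1)).ofReal
    have hzero := h (fun t ↦ F (α * t)) (hF.comp_mul_left' hα.ne')
      (fun m ↦ (hrescale₁ F m).2 (integral_exp_mul_poissonBump_sub hy m))
      (fun n ↦ (hrescale₂ F n).2 (by
        rw [hyb]
        exact integral_exp_inversion_mul_poissonBump_sub hy (-n)))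
    have hfun : (fun t ↦ F (α * t)) = 0 :=
      (Continuous.ae_eq_iff_eq volume (hcont.comp (by fun_prop)) continuous_zero).1 hzero
    have hval : F 1 = 0 := by
      simpa [hα.ne'] using congrFun hfun α⁻¹
    have hreal : poissonBump y (1 + 1) - poissonBump y (1 - 1) = 0 :=
      Complex.ofReal_eq_zero.1 hval
    have hlt' : poissonBump y (1 + 1) < poissonBump y (1 - 1) := by
      unfold poissonBump
      gcongr
      norm_num
    linarith
end

section
/- Fix positive real numbers α and β with αβ < 4. If f ∈ L¹((0,∞), ℂ) satisfies ∫₀^∞ e^{iπαmt} f(t) dt = 0 for all m ∈ ℤ and ∫₀^∞ e^{−iπβn/t} f(t) dt = 0 for all n ∈ ℤ, then f = 0 almost everywhere on (0,∞). -/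
open MeasureTheory Real

theorem integral_continuous_periodic_mul_eq_zero {μ : Measure ℝ} {g : ℝ → ℂ} (hg : Integrable g μ)
    (h : ∀ m : ℤ, ∫ t, Complex.exp (2 * π * Complex.I * m * t) * g t ∂μ = 0)
    (φ : C(UnitAddCircle, ℂ)) : ∫ t, φ (t : UnitAddCircle) * g t ∂μ = 0 := by
  have h_integrable (φ : C(UnitAddCircle, ℂ)) :
      Integrable (fun t : ℝ => φ (t : UnitAddCircle) * g t) μ :=
    hg.bdd_mul (c := ‖φ‖)
      (φ.continuous.comp (AddCircle.continuous_mk' 1)).aestronglyMeasurable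
      (.of_forall fun t => φ.norm_coe_le_norm _)
  let L : C(UnitAddCircle, ℂ) →L[ℂ] ℂ := LinearMap.mkContinuous
    { toFun := fun φ => ∫ t, φ (t : UnitAddCircle) * g t ∂μ
      map_add' := fun φ ψ => by
        simp only [ContinuousMap.add_apply, add_mul]
        exact integral_add (h_integrable φ) (h_integrable ψ)
      map_smul' := fun c φ => by
        simp only [ContinuousMap.smul_apply, smul_mul_assoc, integral_smul, RingHom.id_apply] }
    (∫ t, ‖g t‖ ∂μ) (fun φ => by
      refine (norm_integral_le_integral_norm _).trans ?_
      rw [mul_comm, ← integral_const_mul]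
      refine integral_mono (h_integrable φ).norm (hg.norm.const_mul _) fun t => ?_
      simp only [norm_mul]
      gcongr
      exact φ.norm_coe_le_norm _)
  have hker : (⊤ : Submodule ℂ C(UnitAddCircle, ℂ)) ≤ L.ker := by
    rw [← span_fourier_closure_eq_top]
    refine Submodule.topologicalClosure_minimal _ (Submodule.span_le.2 ?_) L.isClosed_ker
    rintro _ ⟨m, rfl⟩
    change ∫ t : ℝ, fourier m (t : UnitAddCircle) * g t ∂μ = 0
    simpa [fourier_coe_apply] using h m
  exact hker (Submodule.mem_top (x := φ))

theorem integral_measurable_periodic_mul_eq_zero {μ : Measure ℝ} {g : ℝ → ℂ} (hg : Integrable g μ)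
    (h : ∀ m : ℤ, ∫ t, Complex.exp (2 * π * Complex.I * m * t) * g t ∂μ = 0)
    {u : ℝ → ℂ} (hu : Measurable u) (hu1 : ∀ x, ‖u x‖ ≤ 1) :
    ∫ t, u (Int.fract t) * g t ∂μ = 0 := by
  have hcoe : Measurable ((↑) : ℝ → UnitAddCircle) := (AddCircle.continuous_mk' 1).measurable
  let ψ : UnitAddCircle → ℂ := fun x => u (AddCircle.measurableEquivIco 1 0 x)
  have hψ : Measurable ψ :=
    hu.comp (measurable_subtype_coe.comp (AddCircle.measurableEquivIco 1 0).measurable)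
  have hψt (t : ℝ) : ψ t = u (Int.fract t) := by
    have := AddCircle.coe_equivIco_mk_apply (p := (1 : ℝ)) t
    simp only [div_one, mul_one] at this
    exact congrArg u this
  let ν : Measure UnitAddCircle := (μ.withDensity fun t => ‖g t‖ₑ).map (↑)
  have : IsFiniteMeasure (μ.withDensity fun t => ‖g t‖ₑ) :=
    isFiniteMeasure_withDensity hg.2.ne
  have : IsFiniteMeasure ν := inferInstanceAs (IsFiniteMeasure (Measure.map _ _))
  have hψν : Integrable ψ ν :=
    Integrable.of_bound hψ.aestronglyMeasurable 1 (.of_forall fun x => hu1 _)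
  refine norm_le_zero_iff.1 (le_of_forall_pos_le_add fun ε hε => ?_)
  obtain ⟨φ, hφ, -⟩ := hψν.exists_boundedContinuous_integral_sub_le hε
  have hφ0 : ∫ t : ℝ, φ (t : UnitAddCircle) * g t ∂μ = 0 :=
    integral_continuous_periodic_mul_eq_zero hg h φ.toContinuousMap
  have hi1 : Integrable (fun t => u (Int.fract t) * g t) μ :=
    hg.bdd_mul (c := 1) (hu.comp measurable_fract).aestronglyMeasurable
      (.of_forall fun t => hu1 _)
  have hi2 : Integrable (fun t : ℝ => φ (t : UnitAddCircle) * g t) μ :=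
    hg.bdd_mul (c := ‖φ‖)
      (φ.continuous.comp (AddCircle.continuous_mk' 1)).aestronglyMeasurable
      (.of_forall fun t => φ.norm_coe_le_norm _)
  have hν : ∫ x, ‖ψ x - φ x‖ ∂ν = ∫ t : ℝ, ‖g t‖ * ‖ψ t - φ t‖ ∂μ := by
    have hm : AEStronglyMeasurable (fun x => ‖ψ x - φ x‖) ν :=
      (hψ.sub φ.continuous.measurable).norm.aestronglyMeasurable
    rw [integral_map hcoe.aemeasurable hm,
      integral_withDensity_eq_integral_toReal_smul₀ hg.1.enorm (by simp)]
    simp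
  calc ‖∫ t, u (Int.fract t) * g t ∂μ‖
      = ‖∫ t : ℝ, (u (Int.fract t) * g t - φ t * g t) ∂μ‖ := by
        rw [integral_sub hi1 hi2, hφ0, sub_zero]
    _ ≤ ∫ t : ℝ, ‖g t‖ * ‖ψ t - φ t‖ ∂μ := by
        refine (norm_integral_le_integral_norm _).trans_eq (integral_congr_ae (.of_forall ?_))
        intro t
        simp only [hψt, ← sub_mul, norm_mul]
        ring
    _ ≤ 0 + ε := by rw [← hν, zero_add]; exact hφ

theorem setIntegral_norm_le_of_fourier_eq_zero {f : ℝ → ℂ} (hfm : Measurable f)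
    (hf : IntegrableOn f (Set.Ioi 0))
    (h : ∀ m : ℤ, ∫ t in Set.Ioi (0 : ℝ), Complex.exp (2 * π * Complex.I * m * t) * f t = 0) :
    ∫ t in Set.Ioo 0 1, ‖f t‖ ≤ ∫ t in Set.Ioi 1 ∩ {t | f (Int.fract t) ≠ 0}, ‖f t‖ := by
  let u : ℝ → ℂ := fun x => starRingEnd ℂ (f x) / ‖f x‖
  have hu : Measurable u := by fun_prop
  have hu1 (x : ℝ) : ‖u x‖ ≤ 1 := by simpa [u] using div_self_le_one ‖f x‖
  have h0 := integral_measurable_periodic_mul_eq_zero hf h hu hu1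
  have hi : IntegrableOn (fun t => u (Int.fract t) * f t) (Set.Ioi 0) :=
    hf.bdd_mul (c := 1) (hu.comp measurable_fract).aestronglyMeasurable
      (.of_forall fun t => hu1 _)
  have hsub : Set.Ioi (1 : ℝ) ⊆ Set.Ioi 0 := Set.Ioi_subset_Ioi zero_le_one
  rw [← Set.Ioc_union_Ioi_eq_Ioi (zero_le_one' ℝ), setIntegral_union
    (Set.Ioc_disjoint_Ioi le_rfl) measurableSet_Ioi (hi.mono_set Set.Ioc_subset_Ioi_self)
    (hi.mono_set hsub), integral_Ioc_eq_integral_Ioo] at h0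
  have h1 : ∫ t in Set.Ioo 0 1, u (Int.fract t) * f t
      = ((∫ t in Set.Ioo 0 1, ‖f t‖ : ℝ) : ℂ) := by
    rw [← integral_complex_ofReal]
    refine setIntegral_congr_fun measurableSet_Ioo fun t ht => ?_
    have : Int.fract t = t := Int.fract_eq_self.2 ⟨ht.1.le, ht.2⟩
    simp only [this, u]
    by_cases hft : f t = 0
    · simp [hft]
    · have : (‖f t‖ : ℂ) ≠ 0 := by simpa using hft
      field_simp
      rw [mul_comm, Complex.mul_conj']
  have hS : MeasurableSet {t : ℝ | f (Int.fract t) ≠ 0} :=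
    (hfm.comp measurable_fract) (measurableSet_singleton 0).compl
  calc ∫ t in Set.Ioo 0 1, ‖f t‖
      = ‖∫ t in Set.Ioi 1, u (Int.fract t) * f t‖ := by
        rw [h1, add_eq_zero_iff_eq_neg] at h0
        rw [← norm_neg, ← h0, Complex.norm_real, Real.norm_of_nonneg]
        positivity
    _ ≤ ∫ t in Set.Ioi 1, ‖u (Int.fract t) * f t‖ := norm_integral_le_integral_norm _
    _ ≤ ∫ t in Set.Ioi 1, Set.indicator {t | f (Int.fract t) ≠ 0} (fun t => ‖f t‖) t := by
        refine integral_mono (hi.mono_set hsub).norm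
          ((hf.mono_set hsub).norm.indicator hS) fun t => ?_
        by_cases ht : f (Int.fract t) = 0
        · simp [u, ht]
        · simpa [Set.indicator, ht] using
            mul_le_of_le_one_left (norm_nonneg (f t)) (hu1 (Int.fract t))
    _ = _ := setIntegral_indicator hS

theorem hasDerivAt_const_div_id (γ : ℝ) {x : ℝ} (hx : x ≠ 0) :
    HasDerivAt (fun x => γ / x) (-(γ / x ^ 2)) x := by
  simpa [div_eq_mul_inv] using (hasDerivAt_inv hx).const_mul γ

theorem injOn_const_div {γ : ℝ} (hγ : 0 < γ) {s : Set ℝ} (hs : s ⊆ Set.Ioi 0) :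
    Set.InjOn (fun x => γ / x) s := by
  intro x hx y hy hxy
  have hx0 : x ≠ 0 := (hs hx).ne'
  have hy0 : y ≠ 0 := (hs hy).ne'
  simp only at hxy
  rw [div_eq_div_iff hx0 hy0] at hxy
  exact (mul_left_cancel₀ hγ.ne' hxy).symm

theorem image_const_div {γ : ℝ} (hγ : 0 < γ) {s : Set ℝ} (hs : s ⊆ Set.Ioi 0) :
    (fun x => γ / x) '' s = {t | 0 < t ∧ γ / t ∈ s} := by
  ext t
  constructor
  · rintro ⟨x, hx, rfl⟩
    have : 0 < x := hs hx
    refine ⟨by positivity, ?_⟩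
    rwa [div_div_cancel₀ hγ.ne']
  · rintro ⟨-, h⟩
    exact ⟨_, h, div_div_cancel₀ hγ.ne'⟩

theorem ae_const_div {γ : ℝ} (hγ : 0 < γ) {P : ℝ → Prop}
    (h : ∀ᵐ t ∂(volume.restrict (Set.Ioi (0 : ℝ))), P t) :
    ∀ᵐ t ∂(volume.restrict (Set.Ioi (0 : ℝ))), P (γ / t) := by
  rw [ae_restrict_iff' measurableSet_Ioi, ae_iff] at h ⊢
  have hd : DifferentiableOn ℝ (fun x => γ / x) {t | ¬(t ∈ Set.Ioi 0 → P t)} := fun x hx =>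
    (hasDerivAt_const_div_id γ
      (Classical.not_imp.1 hx).1.ne').differentiableAt.differentiableWithinAt
  refine measure_mono_null ?_
    (addHaar_image_eq_zero_of_differentiableOn_of_addHaar_eq_zero volume hd h)
  intro t ht
  obtain ⟨ht0, htP⟩ := Classical.not_imp.1 ht
  exact ⟨γ / t, Classical.not_imp.2 ⟨div_pos hγ ht0, htP⟩, div_div_cancel₀ hγ.ne'⟩

theorem setIntegral_const_div {E : Type*} [NormedAddCommGroup E] [NormedSpace ℝ E]
    {γ : ℝ} (hγ : 0 < γ) {s : Set ℝ} (hsm : MeasurableSet s)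
    (hs : s ⊆ Set.Ioi 0) (F : ℝ → E) :
    ∫ x in s, (γ / x ^ 2) • F (γ / x) = ∫ t in {t | 0 < t ∧ γ / t ∈ s}, F t := by
  rw [← image_const_div hγ hs, integral_image_eq_integral_abs_deriv_smul hsm
    (fun x hx => (hasDerivAt_const_div_id γ (hs hx).ne').hasDerivWithinAt)
    (injOn_const_div hγ hs)]
  refine setIntegral_congr_fun hsm fun x _ => ?_
  simp only [abs_neg, abs_of_nonneg (div_nonneg hγ.le (sq_nonneg x))]

theorem tsum_ofReal_telescope {x : ℝ} (hx : 0 ≤ x) :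
    ∑' n : ℕ, ENNReal.ofReal (1 / ((x + (n + 1)) * (x + (n + 1) + 1)))
      = ENNReal.ofReal (1 / (1 + x)) := by
  have hnn (n : ℕ) : 0 ≤ 1 / ((x + (n + 1)) * (x + (n + 1) + 1)) := by positivity
  have hsum (N : ℕ) : ∑ n ∈ Finset.range N, 1 / ((x + (n + 1)) * (x + (n + 1) + 1))
      = 1 / (1 + x) - 1 / (x + N + 1) := by
    induction N with
    | zero => simp [add_comm]
    | succ N ih =>
      rw [Finset.sum_range_succ, ih]
      push_cast
      field_simp
      ring
  have hs : HasSum (fun n : ℕ => 1 / ((x + (n + 1)) * (x + (n + 1) + 1))) (1 / (1 + x)) := by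
    rw [hasSum_iff_tendsto_nat_of_nonneg hnn]
    simp_rw [hsum]
    have : Filter.Tendsto (fun N : ℕ => 1 / (x + N + 1)) Filter.atTop (nhds 0) := by
      simp_rw [one_div]
      exact (Filter.tendsto_atTop_add_const_right _ _
        (Filter.tendsto_atTop_add_const_left _ _ tendsto_natCast_atTop_atTop)).inv_tendsto_atTop
    simpa using this.const_sub (1 / (1 + x))
  rw [← ENNReal.ofReal_tsum_of_nonneg hnn hs.summable, hs.tsum_eq]

/-- The open Gauss-type map `x ↦ {γ / x}` on `(0, γ)`, `γ < 1`, has no invariant set of positive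
measure, since `1 / (γ + x)` is a strict supersolution for its transfer operator. -/
theorem volume_eq_zero_of_fract_const_div_invariant {γ : ℝ} (hγ : 0 < γ) (hγ1 : γ < 1)
    {C : Set ℝ} (hCm : MeasurableSet C) (hC : C ⊆ Set.Ico 0 1)
    (hinv : ∀ᵐ x, x ∈ C → 0 < x ∧ x < γ ∧ Int.fract (γ / x) ∈ C) : volume C = 0 := by
  by_contra hC0
  let h : ℝ → ENNReal := fun x => ENNReal.ofReal (1 / (γ + x))
  let D : Set ℝ := {u | 1 < u ∧ Int.fract u ∈ C}
  have hDm : MeasurableSet D := measurableSet_Ioi.inter (measurable_fract hCm)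
  have hD0 : D ⊆ Set.Ioi 0 := fun u hu => zero_lt_one.trans hu.1
  have hle : ∫⁻ x in C, h x ≤ ∫⁻ x in C, ENNReal.ofReal (1 / (1 + x)) := by
    calc ∫⁻ x in C, h x ≤ ∫⁻ x in (fun u => γ / u) '' D, h x := by
          refine lintegral_mono_set' ?_
          filter_upwards [hinv] with x hx hxC
          obtain ⟨h0, h1, h2⟩ := hx hxC
          refine ⟨γ / x, ⟨(one_lt_div h0).2 h1, h2⟩, div_div_cancel₀ hγ.ne'⟩
      _ = ∫⁻ u in D, ENNReal.ofReal |-(γ / u ^ 2)| * h (γ / u) :=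
          lintegral_image_eq_lintegral_abs_deriv_mul hDm
            (fun x hx => (hasDerivAt_const_div_id γ (hD0 hx).ne').hasDerivWithinAt)
            (injOn_const_div hγ hD0) h
      _ = ∫⁻ u in D, ENNReal.ofReal (1 / (u * (u + 1))) := by
          refine setLIntegral_congr_fun hDm fun u hu => ?_
          have hu0 : 0 < u := hD0 hu
          simp only [h]
          rw [abs_neg, abs_of_pos (by positivity), ← ENNReal.ofReal_mul (by positivity)]
          congr 1
          field_simp
      _ ≤ ∫⁻ u in ⋃ n : ℕ, (fun x => x + ((n : ℝ) + 1)) '' C,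
            ENNReal.ofReal (1 / (u * (u + 1))) := by
          refine lintegral_mono_set fun u hu => Set.mem_iUnion.2 ?_
          have h1 : 1 ≤ ⌊u⌋ := Int.le_floor.2 (by exact_mod_cast hu.1.le)
          refine ⟨(⌊u⌋ - 1).toNat, Int.fract u, hu.2, ?_⟩
          have h2 : (((⌊u⌋ - 1).toNat : ℤ) : ℝ) = ⌊u⌋ - 1 := by
            rw [Int.toNat_of_nonneg (by lia)]
            push_cast
            rfl
          rw [Int.cast_natCast] at h2
          simp only [h2, sub_add_cancel]
          exact Int.fract_add_floor u
      _ ≤ ∑' n : ℕ, ∫⁻ u in (fun x => x + ((n : ℝ) + 1)) '' C,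
            ENNReal.ofReal (1 / (u * (u + 1))) := lintegral_iUnion_le _ _
      _ = ∑' n : ℕ, ∫⁻ x in C, ENNReal.ofReal (1 / ((x + (n + 1)) * (x + (n + 1) + 1))) := by
          refine tsum_congr fun n => ?_
          rw [lintegral_image_eq_lintegral_abs_deriv_mul hCm
            (fun x _ => ((hasDerivAt_id' x).add_const _).hasDerivWithinAt)
            (add_left_injective _).injOn]
          simp
      _ = ∫⁻ x in C, ∑' n : ℕ, ENNReal.ofReal (1 / ((x + (n + 1)) * (x + (n + 1) + 1))) :=
          (lintegral_tsum fun n => by fun_prop).symm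
      _ = ∫⁻ x in C, ENNReal.ofReal (1 / (1 + x)) :=
          setLIntegral_congr_fun hCm fun x hx => tsum_ofReal_telescope (hC hx).1
  have hfin : ∫⁻ x in C, ENNReal.ofReal (1 / (1 + x)) ≠ ⊤ := by
    refine ne_top_of_le_ne_top ?_ (setLIntegral_mono' (g := fun _ => 1) hCm fun x hx => ?_)
    · simpa using ne_top_of_le_ne_top (by simp) (measure_mono hC)
    · rw [← ENNReal.ofReal_one]
      refine ENNReal.ofReal_le_ofReal ((div_le_one ?_).2 ?_) <;> linarith [(hC hx).1]
  refine absurd hle (not_le.2 (setLIntegral_strict_mono hCm hC0 (by fun_prop) hfin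
    (.of_forall fun x hx => ?_)))
  have := (hC hx).1
  rw [ENNReal.ofReal_lt_ofReal_iff (by positivity)]
  exact one_div_lt_one_div_of_lt (by positivity) (by linarith)

/-- A nonnegative mass which does not decrease when restricted to `V ⊆ U` is carried by `V`. -/
theorem ae_mem_of_setIntegral_norm_le {f : ℝ → ℂ} {U V : Set ℝ} (hU : MeasurableSet U)
    (hV : MeasurableSet V) (hVU : V ⊆ U) (hf : IntegrableOn f U)
    (h : ∫ t in U, ‖f t‖ ≤ ∫ t in V, ‖f t‖) : ∀ᵐ t, t ∈ U → f t ≠ 0 → t ∈ V := by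
  have h0 : ∫ t in U \ V, ‖f t‖ = 0 := by
    refine le_antisymm ?_ (by positivity)
    rw [setIntegral_sdiff hV hf.norm hVU]
    linarith
  rw [setIntegral_eq_zero_iff_of_nonneg_ae (.of_forall fun t => norm_nonneg _)
    (hf.mono_set Set.sdiff_subset).norm, Filter.EventuallyEq,
    ae_restrict_iff' (hU.diff hV)] at h0
  filter_upwards [h0] with t ht htU hft
  by_contra htV
  exact hft (norm_eq_zero.1 (ht ⟨htU, htV⟩))

/-- Normalised form of the uniqueness theorem: period `1` and `γ < 1`. -/
theorem ae_eq_zero_of_fourier_eq_zero {γ : ℝ} (hγ : 0 < γ) (hγ1 : γ < 1) {f : ℝ → ℂ}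
    (hfm : Measurable f) (hf : IntegrableOn f (Set.Ioi 0))
    (h1 : ∀ m : ℤ, ∫ t in Set.Ioi (0 : ℝ), Complex.exp (2 * π * Complex.I * m * t) * f t = 0)
    (h2 : ∀ n : ℤ, ∫ t in Set.Ioi (0 : ℝ),
      Complex.exp (2 * π * Complex.I * n * (γ / t : ℝ)) * f t = 0) :
    ∀ᵐ t ∂(volume.restrict (Set.Ioi (0 : ℝ))), f t = 0 := by
  let g : ℝ → ℂ := fun s => (γ / s ^ 2) • f (γ / s)
  have hgm : Measurable g := by fun_prop
  have hIoi : {t : ℝ | 0 < t ∧ γ / t ∈ Set.Ioi 0} = Set.Ioi 0 := by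
    ext t
    exact ⟨fun h => h.1, fun h => ⟨h, div_pos hγ h⟩⟩
  have hg : IntegrableOn g (Set.Ioi 0) := by
    rw [← hIoi, ← image_const_div hγ subset_rfl,
      integrableOn_image_iff_integrableOn_abs_deriv_smul measurableSet_Ioi
        (fun x hx => (hasDerivAt_const_div_id γ (ne_of_gt hx)).hasDerivWithinAt)
        (injOn_const_div hγ subset_rfl)] at hf
    refine hf.congr_fun (fun x _ => ?_) measurableSet_Ioi
    simp only [g, abs_neg, abs_of_nonneg (div_nonneg hγ.le (sq_nonneg x))]
  have hg1 (m : ℤ) :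
      ∫ t in Set.Ioi (0 : ℝ), Complex.exp (2 * π * Complex.I * m * t) * g t = 0 := by
    have hcv := setIntegral_const_div hγ measurableSet_Ioi subset_rfl
      (fun t : ℝ => Complex.exp (2 * π * Complex.I * m * (γ / t : ℝ)) * f t)
    rw [hIoi] at hcv
    rw [← h2 m, ← hcv]
    refine setIntegral_congr_fun measurableSet_Ioi fun x _ => ?_
    simp only [g, mul_smul_comm, div_div_cancel₀ hγ.ne']
  have hnorm {s : Set ℝ} (hsm : MeasurableSet s) (hs : s ⊆ Set.Ioi 0) :
      ∫ x in s, ‖g x‖ = ∫ t in {t | 0 < t ∧ γ / t ∈ s}, ‖f t‖ := by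
    rw [← setIntegral_const_div hγ hsm hs]
    refine setIntegral_congr_fun hsm fun x _ => ?_
    simp only [g, norm_smul, smul_eq_mul, Real.norm_of_nonneg (div_nonneg hγ.le (sq_nonneg x))]
  have hmono {φ : ℝ → ℂ} (hφ : IntegrableOn φ (Set.Ioi 0)) {U V : Set ℝ} (hVU : V ⊆ U)
      (hU : U ⊆ Set.Ioi 0) : ∫ t in V, ‖φ t‖ ≤ ∫ t in U, ‖φ t‖ := by
    have hφU : IntegrableOn (fun t => ‖φ t‖) U := (hφ.mono_set hU).norm
    exact setIntegral_mono_set hφU (.of_forall fun t => norm_nonneg _) hVU.eventuallyLE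
  have sub1 : Set.Ioi (1 : ℝ) ⊆ Set.Ioi 0 := Set.Ioi_subset_Ioi zero_le_one
  have e1 : ∫ x in Set.Ioo 0 1, ‖g x‖ = ∫ t in Set.Ioi γ, ‖f t‖ := by
    rw [hnorm measurableSet_Ioo Set.Ioo_subset_Ioi_self]
    congr 2
    ext t
    refine ⟨fun h => (div_lt_one h.1).1 h.2.2, fun h => ?_⟩
    have ht : 0 < t := hγ.trans h
    exact ⟨ht, div_pos hγ ht, (div_lt_one ht).2 h⟩
  have e2 : ∫ x in Set.Ioi 1, ‖g x‖ = ∫ t in Set.Ioo 0 γ, ‖f t‖ := by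
    rw [hnorm measurableSet_Ioi sub1]
    congr 2
    ext t
    exact ⟨fun h => ⟨h.1, (one_lt_div h.1).1 h.2⟩, fun h => ⟨h.1, (one_lt_div h.1).2 h.2⟩⟩
  have e3 : ∫ x in Set.Ioo 0 γ, ‖g x‖ = ∫ t in Set.Ioi 1, ‖f t‖ := by
    rw [hnorm measurableSet_Ioo Set.Ioo_subset_Ioi_self]
    congr 2
    ext t
    refine ⟨fun h => (lt_mul_iff_one_lt_right hγ).1 ((div_lt_iff₀ h.1).1 h.2.2), fun h => ?_⟩
    have ht : 0 < t := zero_lt_one.trans h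
    exact ⟨ht, div_pos hγ ht, div_lt_self hγ h⟩
  have hA : MeasurableSet {t : ℝ | f (Int.fract t) ≠ 0} :=
    (hfm.comp measurable_fract) (measurableSet_singleton 0).compl
  have hB : MeasurableSet {t : ℝ | g (Int.fract t) ≠ 0} :=
    (hgm.comp measurable_fract) (measurableSet_singleton 0).compl
  have i1 := setIntegral_norm_le_of_fourier_eq_zero hfm hf h1
  have i2 := setIntegral_norm_le_of_fourier_eq_zero hgm hg hg1
  have i3 := hmono hf (Set.inter_subset_left (s := Set.Ioi 1)
    (t := {t : ℝ | f (Int.fract t) ≠ 0})) sub1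
  have i4 := hmono hg (Set.inter_subset_left (s := Set.Ioi 1)
    (t := {t : ℝ | g (Int.fract t) ≠ 0})) sub1
  have i5 := hmono hf (Set.Ioi_subset_Ioi hγ1.le) (Set.Ioi_subset_Ioi hγ.le)
  have i6 := hmono hf (Set.Ioo_subset_Ioo_right hγ1.le) (Set.Ioo_subset_Ioi_self (a := 1) (b := 0))
  have k1 := ae_mem_of_setIntegral_norm_le measurableSet_Ioi (measurableSet_Ioi.inter hA)
    Set.inter_subset_left (hf.mono_set sub1) (by linarith)
  have k2 := ae_mem_of_setIntegral_norm_le measurableSet_Ioi (measurableSet_Ioi.inter hB)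
    Set.inter_subset_left (hg.mono_set sub1) (by linarith)
  have k3 := ae_mem_of_setIntegral_norm_le measurableSet_Ioo measurableSet_Ioo
    (Set.Ioo_subset_Ioo_right hγ1.le) (hf.mono_set Set.Ioo_subset_Ioi_self) (by linarith)
  have k4 := ae_mem_of_setIntegral_norm_le measurableSet_Ioo measurableSet_Ioo
    (Set.Ioo_subset_Ioo_right hγ1.le) (hg.mono_set Set.Ioo_subset_Ioi_self) (by linarith)
  have hfg {x : ℝ} (hx : 0 < x) : g x ≠ 0 ↔ f (γ / x) ≠ 0 := by
    simp [g, hγ.ne', hx.ne']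
  have hgf {x : ℝ} (hx : 0 < x) : f x ≠ 0 ↔ g (γ / x) ≠ 0 := by
    rw [hfg (div_pos hγ hx), div_div_cancel₀ hγ.ne']
  let C : Set ℝ := Set.Ico 0 1 ∩ {x | f x ≠ 0 ∨ g x ≠ 0}
  have hCm : MeasurableSet C := measurableSet_Ico.inter
    ((hfm (measurableSet_singleton 0).compl).union (hgm (measurableSet_singleton 0).compl))
  have hfr (u : ℝ) : Int.fract u ∈ Set.Ico (0 : ℝ) 1 := ⟨Int.fract_nonneg u, Int.fract_lt_one u⟩
  have hC0 : volume C = 0 := by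
    refine volume_eq_zero_of_fract_const_div_invariant hγ hγ1 hCm Set.inter_subset_left ?_
    have k1' := (ae_restrict_iff' measurableSet_Ioi).1 (ae_const_div hγ (ae_restrict_of_ae k1))
    have k2' := (ae_restrict_iff' measurableSet_Ioi).1 (ae_const_div hγ (ae_restrict_of_ae k2))
    filter_upwards [k1', k2', k3, k4, Measure.ae_ne volume (0 : ℝ)] with x k1 k2 k3 k4 hx0 hx
    have hx0 : 0 < x := lt_of_le_of_ne hx.1.1 hx0.symm
    rcases hx.2 with hx2 | hx2
    · have hxγ := (k3 ⟨hx0, hx.1.2⟩ hx2).2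
      exact ⟨hx0, hxγ, hfr _, .inr (k2 hx0 ((one_lt_div hx0).2 hxγ) ((hgf hx0).1 hx2)).2⟩
    · have hxγ := (k4 ⟨hx0, hx.1.2⟩ hx2).2
      exact ⟨hx0, hxγ, hfr _, .inl (k1 hx0 ((one_lt_div hx0).2 hxγ) ((hfg hx0).1 hx2)).2⟩
  have hC : ∀ᵐ t ∂(volume.restrict (Set.Ioi (0 : ℝ))), t ∉ C :=
    ae_restrict_of_ae (measure_eq_zero_iff_ae_notMem.1 hC0)
  filter_upwards [hC, ae_const_div hγ hC, ae_restrict_mem measurableSet_Ioi] with t ht ht' ht0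
  have ht0 : 0 < t := ht0
  by_contra hft
  rcases lt_or_ge t 1 with h | h
  · exact ht ⟨⟨ht0.le, h⟩, .inl hft⟩
  · exact ht' ⟨⟨(div_pos hγ ht0).le, (div_lt_one ht0).2 (hγ1.trans_le h)⟩,
      .inr ((hgf ht0).1 hft)⟩

/-- Subcritical regime `αβ < 4` for one branch of the hyperbola: the
lattice-cross is a uniqueness set for `L¹` densities on the half-line. -/
theorem stmt_1 (α β : ℝ) (hα : 0 < α) (hβ : 0 < β) (hsub : α * β < 4)
    (f : ℝ → ℂ) (hf : IntegrableOn f (Set.Ioi 0))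
    (h1 : ∀ m : ℤ, ∫ t in Set.Ioi (0:ℝ), Complex.exp (Complex.I * π * α * m * t) * f t = 0)
    (h2 : ∀ n : ℤ, ∫ t in Set.Ioi (0:ℝ), Complex.exp (-(Complex.I * π * β * n) / t) * f t = 0) :
    ∀ᵐ t ∂(volume.restrict (Set.Ioi (0:ℝ))), f t = 0 := by
  have hp : 0 < 2 / α := by positivity
  have hαC : (α : ℂ) ≠ 0 := by exact_mod_cast hα.ne'
  let f' : ℝ → ℂ := hf.1.mk f
  have hff' : f =ᵐ[volume.restrict (Set.Ioi 0)] f' := hf.1.ae_eq_mk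
  have hf'm : Measurable f' := hf.1.stronglyMeasurable_mk.measurable
  have hscale (w : ℝ → ℂ) (h : ∫ t in Set.Ioi (0 : ℝ), w t * f t = 0) :
      ∫ x in Set.Ioi (0 : ℝ), w (2 / α * x) * f' (2 / α * x) = 0 := by
    rw [integral_comp_mul_left_Ioi (fun t => w t * f' t) 0 hp, mul_zero,
      ← integral_congr_ae (hff'.mono fun t ht => congrArg (w t * ·) ht), h, smul_zero]
  have key : ∀ᵐ x ∂(volume.restrict (Set.Ioi (0 : ℝ))), f' (2 / α * x) = 0 := by
    refine ae_eq_zero_of_fourier_eq_zero (γ := α * β / 4) (by positivity) (by linarith)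
      (hf'm.comp (measurable_const_mul _)) ?_ (fun m => ?_) fun n => ?_
    · rw [integrableOn_Ioi_comp_mul_left_iff _ _ hp, mul_zero]
      exact hf.congr hff'
    · rw [← hscale _ (h1 m)]
      refine setIntegral_congr_fun measurableSet_Ioi fun x _ => ?_
      congr 2
      push_cast
      field_simp
    · rw [← hscale _ (h2 (-n))]
      refine setIntegral_congr_fun measurableSet_Ioi fun x hx => ?_
      have hx0 : (x : ℂ) ≠ 0 := by exact_mod_cast (ne_of_gt hx)
      congr 2
      push_cast
      field_simp
      ring
  filter_upwards [ae_const_div hp (ae_const_div zero_lt_one key), hff'] with t ht hft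
  rw [hft, ← ht]
  congr 1
  field_simp
end
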